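/- Suppose σ > 4/N, and σ < ∞ if N ≤ 4, σ < 4/(N-4) if N ≥ 5. Assume 0 < m < μ₀, where μ₀ = B(N,σ)^{-1/σ}·[(Nσ/(4(σ+1)))·(Nσ/2 - 1)]^{-1/σ}·((Nσ-2)/(Nσ-4))^{2/σ - N/2}, and assume Ẽ_min(m) < -m. Then Ẽ_min(m) is achieved. Moreover, for any sequence (u_n) ⊂ O satisfying ‖u_n‖_{L²}² → m and E(u_n) → Ẽ_min(m), there exist a subsequence (u_{n_k}), a sequence of points (x_k) ⊂ ℝ^N, and u ∈ O such that u_{n_k}(·+x_k) → u strongly in H²(ℝ^N) (so ‖u‖_{L²}² = m and E(u) = Ẽ_min(m)). -/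

import Mathlib

open MeasureTheory Filter Topology

noncomputable section

abbrev Esp (N : ℕ) := EuclideanSpace ℝ (Fin N)

/-- Smooth compactly supported test functions. -/
def TestFun {N : ℕ} (φ : Esp N → ℂ) : Prop :=
  ContDiff ℝ (⊤ : ℕ∞) φ ∧ HasCompactSupport φ

/-- Partial derivative in the `i`-th coordinate direction. -/
def pderivC {N : ℕ} (i : Fin N) (φ : Esp N → ℂ) : Esp N → ℂ :=
  fun x => fderiv ℝ φ x (EuclideanSpace.single i (1 : ℝ))

/-- The Laplacian of a (smooth) function. -/
def lapC {N : ℕ} (φ : Esp N → ℂ) : Esp N → ℂ :=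
  fun x => ∑ i, pderivC i (pderivC i φ) x

/-- `v` is the weak `i`-th partial derivative of `u`. -/
def IsWeakPDeriv {N : ℕ} (u : Esp N → ℂ) (i : Fin N) (v : Esp N → ℂ) : Prop :=
  ∀ φ : Esp N → ℂ, TestFun φ → ∫ x, u x * pderivC i φ x = - ∫ x, v x * φ x

/-- `v` is the weak Laplacian of `u`. -/
def IsWeakLap {N : ℕ} (u v : Esp N → ℂ) : Prop :=
  ∀ φ : Esp N → ℂ, TestFun φ → ∫ x, u x * lapC φ x = ∫ x, v x * φ x

/-- An element of the Sobolev space `H²(ℝ^N, ℂ)`: an `L²` function together with its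
weak partial derivatives and its weak Laplacian, all in `L²`. -/
structure H2 (N : ℕ) where
  u : Esp N → ℂ
  grad : Fin N → Esp N → ℂ
  lapl : Esp N → ℂ
  u_mem : MemLp u 2 (volume : Measure (Esp N))
  grad_mem : ∀ i, MemLp (grad i) 2 (volume : Measure (Esp N))
  lapl_mem : MemLp lapl 2 (volume : Measure (Esp N))
  grad_spec : ∀ i, IsWeakPDeriv u i (grad i)
  lapl_spec : IsWeakLap u lapl

namespace H2

variable {N : ℕ}

/-- `∫ |u|²`. -/
def massSq (U : H2 N) : ℝ := ∫ x, ‖U.u x‖ ^ 2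

/-- `∫ |∇u|²`. -/
def gradSq (U : H2 N) : ℝ := ∑ i, ∫ x, ‖U.grad i x‖ ^ 2

/-- `∫ |Δu|²`. -/
def lapSq (U : H2 N) : ℝ := ∫ x, ‖U.lapl x‖ ^ 2

/-- `∫ |u|^{2σ+2}`. -/
def pPow (σ : ℝ) (U : H2 N) : ℝ := ∫ x, ‖U.u x‖ ^ (2 * σ + 2)

/-- The energy `E(u) = ∫|Δu|² - 2∫|∇u|² - (1/(σ+1))∫|u|^{2σ+2}`. -/
def energy (σ : ℝ) (U : H2 N) : ℝ :=
  U.lapSq - 2 * U.gradSq - (1 / (σ + 1)) * U.pPow σ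

/-- The square of the `H²` norm. -/
def h2NormSq (U : H2 N) : ℝ := U.massSq + U.gradSq + U.lapSq

/-- `u` does not vanish almost everywhere. -/
def Nontriv (U : H2 N) : Prop := ¬ (U.u =ᵐ[(volume : Measure (Esp N))] 0)

end H2

/-- `E_min(m) = inf {E(u) : u ∈ H², ∫|u|² = m}`, with values in `EReal`. -/
def EminE (N : ℕ) (σ m : ℝ) : EReal :=
  ⨅ (U : H2 N) (_ : U.massSq = m), ((U.energy σ : ℝ) : EReal)

/-- The `L^p` norm (as a real number) of a function on `ℝ^N`. -/
def rLp {N : ℕ} (p : ℝ) (f : Esp N → ℂ) : ℝ :=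
  (eLpNorm f (ENNReal.ofReal p) (volume : Measure (Esp N))).toReal


/-- The best constant `B(N,σ)` in the Gagliardo–Nirenberg–Sobolev inequality
`‖u‖_{L^{2σ+2}}^{2σ+2} ≤ B ‖Δu‖_{L²}^{Nσ/2} ‖u‖_{L²}^{2+2σ-Nσ/2}`. -/
def GNconst (N : ℕ) (σ : ℝ) : ℝ :=
  sSup {r : ℝ | ∃ U : H2 N, U.Nontriv ∧
    r = U.pPow σ /
      (rLp 2 U.lapl ^ ((N : ℝ) * σ / 2) * rLp 2 U.u ^ (2 + 2 * σ - (N : ℝ) * σ / 2))}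

/-- `k* = (σ+1)^{1/σ} B(N,σ)^{-1/σ}`. -/
def kstar (N : ℕ) (σ : ℝ) : ℝ := (σ + 1) ^ (1 / σ) * GNconst N σ ^ (-(1 / σ))

/-- Strong `H²` convergence of `v k (· + xs k)` to `U`. -/
def H2TendstoTrans {N : ℕ} (v : ℕ → H2 N) (xs : ℕ → Esp N) (U : H2 N) : Prop :=
  Tendsto (fun k => eLpNorm (fun x => (v k).u (x + xs k) - U.u x) 2
      (volume : Measure (Esp N))) atTop (nhds 0) ∧
  (∀ i, Tendsto (fun k => eLpNorm (fun x => (v k).grad i (x + xs k) - U.grad i x) 2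
      (volume : Measure (Esp N))) atTop (nhds 0)) ∧
  Tendsto (fun k => eLpNorm (fun x => (v k).lapl (x + xs k) - U.lapl x) 2
      (volume : Measure (Esp N))) atTop (nhds 0)

/-- `u` is a weak (`H^{-2}`) solution of `Δ²u + 2Δu + (1+c)u - |u|^{2σ}u = 0`. -/
def SolvesSW {N : ℕ} (σ c : ℝ) (U : H2 N) : Prop :=
  ∀ φ : Esp N → ℂ, TestFun φ →
    (∫ x, U.lapl x * lapC φ x) + 2 * (∫ x, U.lapl x * φ x) +
        ((1 + c : ℝ) : ℂ) * (∫ x, U.u x * φ x) -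
        (∫ x, ((‖U.u x‖ ^ (2 * σ) : ℝ) : ℂ) * U.u x * φ x) = 0

/-- `T_c(u) = ∫|Δu|² - 2∫|∇u|² + (1+c)∫|u|²`. -/
def Tfun {N : ℕ} (c : ℝ) (U : H2 N) : ℝ := U.lapSq - 2 * U.gradSq + (1 + c) * U.massSq

/-- `t(c) = inf {T_c(u) : ∫|u|^{2σ+2} = 1}`. -/
def tmin (N : ℕ) (σ c : ℝ) : ℝ := sInf {r : ℝ | ∃ U : H2 N, U.pPow σ = 1 ∧ r = Tfun c U}

/-- The action `S_c(u) = E(u) + (1+c)‖u‖_{L²}² = T_c(u) - (1/(σ+1))∫|u|^{2σ+2}`. -/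
def action {N : ℕ} (σ c : ℝ) (U : H2 N) : ℝ := U.energy σ + (1 + c) * U.massSq

/-- `D(u) = ∫|Δu|² - (Nσ/(4(σ+1)))(Nσ/2 - 1) ∫|u|^{2σ+2}`. -/
def Dfun {N : ℕ} (σ : ℝ) (U : H2 N) : ℝ :=
  U.lapSq - (N : ℝ) * σ / (4 * (σ + 1)) * ((N : ℝ) * σ / 2 - 1) * U.pPow σ

/-- `φ_u(t) = E(u_t)` where `u_t(x) = t^{N/4} u(t^{1/2} x)`, i.e.
`φ_u(t) = t² ∫|Δu|² - 2t ∫|∇u|² - (t^{Nσ/2}/(σ+1)) ∫|u|^{2σ+2}`. -/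
def phiFun {N : ℕ} (σ : ℝ) (U : H2 N) (t : ℝ) : ℝ :=
  t ^ 2 * U.lapSq - 2 * t * U.gradSq - t ^ ((N : ℝ) * σ / 2) / (σ + 1) * U.pPow σ

/-- The inflection point `t_{u,infl}`, the unique zero of `φ''_u`. -/
def tInfl {N : ℕ} (σ : ℝ) (U : H2 N) : ℝ :=
  (8 * (σ + 1) * U.lapSq / ((N : ℝ) * σ * ((N : ℝ) * σ - 2) * U.pPow σ)) ^
    (2 / ((N : ℝ) * σ - 4))

/-- The open set `O = {u ≠ 0 : D(u) > 0 and φ'_u(t_{u,infl}) > 0}`. -/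
def memO {N : ℕ} (σ : ℝ) (U : H2 N) : Prop :=
  U.Nontriv ∧ 0 < Dfun σ U ∧ 0 < deriv (phiFun σ U) (tInfl σ U)

/-- `Ẽ_min(m) = inf {E(u) : u ∈ O, ‖u‖_{L²}² = m}`. -/
def tildeE (N : ℕ) (σ m : ℝ) : ℝ :=
  sInf {r : ℝ | ∃ U : H2 N, memO σ U ∧ U.massSq = m ∧ r = U.energy σ}

/-- The mass threshold `μ₀`. -/
def mu0 (N : ℕ) (σ : ℝ) : ℝ :=
  GNconst N σ ^ (-(1 / σ)) *
    ((N : ℝ) * σ / (4 * (σ + 1)) * ((N : ℝ) * σ / 2 - 1)) ^ (-(1 / σ)) *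
    (((N : ℝ) * σ - 2) / ((N : ℝ) * σ - 4)) ^ (2 / σ - (N : ℝ) / 2)


open MeasureTheory Filter Topology

noncomputable section


theorem TestFun.memLp {N : ℕ} {φ : Esp N → ℂ} (h : TestFun φ) (p : ENNReal) :
    MemLp φ p (volume : Measure (Esp N)) :=
  h.1.continuous.memLp_of_hasCompactSupport h.2

theorem TestFun.pderivC {N : ℕ} {φ : Esp N → ℂ} (h : TestFun φ) (i : Fin N) :
    TestFun (_root_.pderivC i φ) := by
  refine ⟨?_, ?_⟩
  · exact (h.1.fderiv_right (m := ((⊤ : ℕ∞) : WithTop ℕ∞)) (by norm_cast)).clm_apply contDiff_const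
  · exact h.2.fderiv_apply (𝕜 := ℝ) _

theorem TestFun.lapC_eq {N : ℕ} {φ : Esp N → ℂ} :
    lapC φ = fun x => ∑ i, _root_.pderivC i (_root_.pderivC i φ) x := rfl

theorem TestFun.lapC {N : ℕ} {φ : Esp N → ℂ} (h : TestFun φ) : TestFun (_root_.lapC φ) := by
  refine ⟨ContDiff.sum fun i _ => ((h.pderivC i).pderivC i).1, ?_⟩
  have : _root_.lapC φ = ∑ i, _root_.pderivC i (_root_.pderivC i φ) := by
    ext x; simp [_root_.lapC]
  rw [this]
  refine Finset.sum_induction _ (fun f : Esp N → ℂ => HasCompactSupport f) (fun _ _ => HasCompactSupport.add) ?_ ?_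
  · exact HasCompactSupport.zero
  · intro i _
    exact ((h.pderivC i).pderivC i).2

theorem integrable_mul_L2 {N : ℕ} {f g : Esp N → ℂ} (hf : MemLp f 2 (volume : Measure (Esp N)))
    (hg : MemLp g 2 (volume : Measure (Esp N))) : Integrable (fun x => f x * g x) :=
  hf.integrable_mul hg

namespace H2

variable {N : ℕ}

/-- Difference. -/
def sub (U V : H2 N) : H2 N where
  u := fun x => U.u x - V.u x
  grad := fun i x => U.grad i x - V.grad i x
  lapl := fun x => U.lapl x - V.lapl x
  u_mem := U.u_mem.sub V.u_mem
  grad_mem := fun i => (U.grad_mem i).sub (V.grad_mem i)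
  lapl_mem := U.lapl_mem.sub V.lapl_mem
  grad_spec := by
    intro i φ hφ
    have h1 := U.grad_spec i φ hφ
    have h2 := V.grad_spec i φ hφ
    simp only [sub_mul]
    rw [integral_sub (integrable_mul_L2 U.u_mem ((hφ.pderivC i).memLp 2))
      (integrable_mul_L2 V.u_mem ((hφ.pderivC i).memLp 2)),
      integral_sub (integrable_mul_L2 (U.grad_mem i) (hφ.memLp 2))
      (integrable_mul_L2 (V.grad_mem i) (hφ.memLp 2)), h1, h2]
    ring
  lapl_spec := by
    intro φ hφ
    have h1 := U.lapl_spec φ hφ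
    have h2 := V.lapl_spec φ hφ
    simp only [sub_mul]
    rw [integral_sub (integrable_mul_L2 U.u_mem (hφ.lapC.memLp 2))
      (integrable_mul_L2 V.u_mem (hφ.lapC.memLp 2)),
      integral_sub (integrable_mul_L2 U.lapl_mem (hφ.memLp 2))
      (integrable_mul_L2 V.lapl_mem (hφ.memLp 2)), h1, h2]

end H2


theorem integral_aff {N : ℕ} {F : Type*} [NormedAddCommGroup F] [NormedSpace ℝ F]
    (f : Esp N → F) {r : ℝ} (hr : 0 < r) (x0 : Esp N) :
    ∫ x, f (r • x + x0) = (r ^ N)⁻¹ • ∫ x, f x := by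
  have := Measure.integral_comp_smul (volume : Measure (Esp N)) (fun x => f (x + x0)) r
  rw [this, integral_add_right_eq_self]
  rw [abs_of_pos (by positivity)]
  simp

theorem qmp_aff {N : ℕ} {r : ℝ} (hr : 0 < r) (x0 : Esp N) :
    Measure.QuasiMeasurePreserving (fun x : Esp N => r • x + x0)
      (volume : Measure (Esp N)) volume := by
  have h1 : Measure.QuasiMeasurePreserving (fun x : Esp N => r • x)
      (volume : Measure (Esp N)) volume := by
    refine ⟨measurable_const_smul r, ?_⟩
    rw [Measure.map_addHaar_smul _ hr.ne']
    exact Measure.smul_absolutelyContinuous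
  exact (quasiMeasurePreserving_add_right volume x0).comp h1

theorem memLp_aff {N : ℕ} {f : Esp N → ℂ} (hf : MemLp f 2 (volume : Measure (Esp N)))
    {r : ℝ} (hr : 0 < r) (x0 : Esp N) :
    MemLp (fun x => f (r • x + x0)) 2 (volume : Measure (Esp N)) := by
  have hm := hf.1.comp_quasiMeasurePreserving (qmp_aff hr x0)
  have h2 := (memLp_two_iff_integrable_sq_norm hf.1).1 hf
  refine (memLp_two_iff_integrable_sq_norm hm).2 ?_
  exact (h2.comp_add_right x0).comp_smul hr.ne'

theorem pderivC_aff {N : ℕ} {φ : Esp N → ℂ} (hφ : TestFun φ) (i : Fin N) (r : ℝ) (x0 x : Esp N) :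
    pderivC i (fun y => φ (r • y + x0)) x = r * pderivC i φ (r • x + x0) := by
  have h1 : HasFDerivAt φ (fderiv ℝ φ (r • x + x0)) (r • x + x0) :=
    (hφ.1.differentiable (by norm_num) _).hasFDerivAt
  have h2 : HasFDerivAt (fun y : Esp N => r • y + x0) (r • ContinuousLinearMap.id ℝ (Esp N)) x :=
    ((hasFDerivAt_id x).const_smul r).add_const x0
  unfold pderivC
  have h3 : HasFDerivAt (fun y => φ (r • y + x0)) _ x := h1.comp x h2
  rw [h3.fderiv]
  simp

theorem TestFun.aff {N : ℕ} {φ : Esp N → ℂ} (hφ : TestFun φ) {r : ℝ} (hr : 0 < r) (x0 : Esp N) :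
    TestFun (fun y => φ (r • y + x0)) := by
  refine ⟨hφ.1.comp (by fun_prop), ?_⟩
  have := hφ.2.comp_homeomorph ((Homeomorph.smulOfNeZero r hr.ne').trans (Homeomorph.addRight x0))
  exact this

theorem lapC_aff {N : ℕ} {φ : Esp N → ℂ} (hφ : TestFun φ) (r : ℝ) (x0 x : Esp N) :
    lapC (fun y => φ (r • y + x0)) x = r ^ 2 * lapC φ (r • x + x0) := by
  unfold lapC
  rw [Finset.mul_sum]
  refine Finset.sum_congr rfl fun i _ => ?_
  have h : pderivC i (fun y => φ (r • y + x0)) = fun x => (r : ℂ) * pderivC i φ (r • x + x0) := by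
    ext x; exact pderivC_aff hφ i r x0 x
  rw [h]
  have h2 := pderivC_aff (hφ.pderivC i) i r x0 x
  have h3 : DifferentiableAt ℝ (fun y => pderivC i φ (r • y + x0)) x := by
    have := (hφ.pderivC i).1.differentiable (by norm_num)
    fun_prop
  have : pderivC i (fun x => (r : ℂ) * pderivC i φ (r • x + x0)) x
      = r * pderivC i (fun x => pderivC i φ (r • x + x0)) x := by
    unfold pderivC at h3 ⊢
    rw [fderiv_const_mul h3]
    simp
  rw [this, h2]
  ring

namespace H2

variable {N : ℕ}

/-- `c u(r x + x0)`. -/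
def aff (U : H2 N) (c r : ℝ) (hr : 0 < r) (x0 : Esp N) : H2 N where
  u := fun x => (c : ℂ) * U.u (r • x + x0)
  grad := fun i x => ((c * r : ℝ) : ℂ) * U.grad i (r • x + x0)
  lapl := fun x => ((c * r ^ 2 : ℝ) : ℂ) * U.lapl (r • x + x0)
  u_mem := (memLp_aff U.u_mem hr x0).const_mul _
  grad_mem := fun i => (memLp_aff (U.grad_mem i) hr x0).const_mul _
  lapl_mem := (memLp_aff U.lapl_mem hr x0).const_mul _
  grad_spec := by
    intro i φ hφ
    have hr' : 0 < r⁻¹ := by positivity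
    have key := U.grad_spec i _ (hφ.aff hr' (-(r⁻¹ • x0)))
    have e1 := integral_aff (fun y => (c : ℂ) * U.u y * (r * pderivC i (fun y => φ (r⁻¹ • y + -(r⁻¹ • x0))) y)) hr x0
    have e2 := integral_aff (fun y => ((c * r : ℝ) : ℂ) * U.grad i y * (φ (r⁻¹ • y + -(r⁻¹ • x0)))) hr x0
    have hx : ∀ x, r⁻¹ • (r • x + x0) + -(r⁻¹ • x0) = x := by
      intro x; rw [smul_add, smul_smul, inv_mul_cancel₀ hr.ne']; simp
    have hrc : (r : ℂ) ≠ 0 := by exact_mod_cast hr.ne'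
    simp only [hx] at e1 e2
    rw [e2]
    have e1' : ∫ x, (c : ℂ) * U.u (r • x + x0) * pderivC i φ x = ∫ x, (c : ℂ) * U.u (r • x + x0) * (r * pderivC i (fun y => φ (r⁻¹ • y + -(r⁻¹ • x0))) (r • x + x0)) := by
      congr 1; ext x
      rw [pderivC_aff hφ, hx]
      push_cast; field_simp
    rw [e1', e1]
    refine Eq.trans ?_ (smul_neg _ _)
    congr 1
    have e3 : ∫ y, (c : ℂ) * U.u y * (r * pderivC i (fun y => φ (r⁻¹ • y + -(r⁻¹ • x0))) y) = (c * r : ℂ) * ∫ y, U.u y * pderivC i (fun y => φ (r⁻¹ • y + -(r⁻¹ • x0))) y := by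
      rw [← integral_const_mul]; congr 1; ext; ring
    rw [e3, key, mul_neg, ← integral_const_mul]
    congr 2; ext; push_cast; ring
  lapl_spec := by
    intro φ hφ
    have hr' : 0 < r⁻¹ := by positivity
    have key := U.lapl_spec _ (hφ.aff hr' (-(r⁻¹ • x0)))
    have e1 := integral_aff (fun y => (c : ℂ) * U.u y * (r ^ 2 * lapC (fun y => φ (r⁻¹ • y + -(r⁻¹ • x0))) y)) hr x0
    have e2 := integral_aff (fun y => ((c * r ^ 2 : ℝ) : ℂ) * U.lapl y * (φ (r⁻¹ • y + -(r⁻¹ • x0)))) hr x0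
    have hx : ∀ x, r⁻¹ • (r • x + x0) + -(r⁻¹ • x0) = x := by
      intro x; rw [smul_add, smul_smul, inv_mul_cancel₀ hr.ne']; simp
    have hrc : (r : ℂ) ≠ 0 := by exact_mod_cast hr.ne'
    simp only [hx] at e1 e2
    rw [e2]
    have e1' : ∫ x, (c : ℂ) * U.u (r • x + x0) * lapC φ x = ∫ x, (c : ℂ) * U.u (r • x + x0) * (r ^ 2 * lapC (fun y => φ (r⁻¹ • y + -(r⁻¹ • x0))) (r • x + x0)) := by
      congr 1; ext x
      rw [lapC_aff hφ, hx]
      push_cast; field_simp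
    rw [e1', e1]
    congr 1
    have e3 : ∫ y, (c : ℂ) * U.u y * (r ^ 2 * lapC (fun y => φ (r⁻¹ • y + -(r⁻¹ • x0))) y) = (c * r ^ 2 : ℂ) * ∫ y, U.u y * lapC (fun y => φ (r⁻¹ • y + -(r⁻¹ • x0))) y := by
      rw [← integral_const_mul]; congr 1; ext; ring
    rw [e3, key, ← integral_const_mul]
    congr 2; ext; push_cast; ring

variable (U : H2 N) (c r : ℝ) (hr : 0 < r) (x0 : Esp N)

theorem norm_aux {r : ℝ} (hr : 0 < r) (x0 : Esp N) (d : ℝ) (f : Esp N → ℂ) :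
    ∫ x, ‖(d : ℂ) * f (r • x + x0)‖ ^ 2 = d ^ 2 * ((r ^ N)⁻¹ * ∫ x, ‖f x‖ ^ 2) := by
  have := integral_aff (fun x => ‖f x‖ ^ 2) hr x0
  rw [smul_eq_mul] at this
  rw [← this, ← integral_const_mul]
  congr 1; ext x
  rw [norm_mul, mul_pow]; simp

theorem massSq_aff : (U.aff c r hr x0).massSq = c ^ 2 * (r ^ N)⁻¹ * U.massSq := by
  unfold massSq aff; rw [norm_aux hr]; ring

theorem lapSq_aff : (U.aff c r hr x0).lapSq = c ^ 2 * (r ^ N)⁻¹ * r ^ 4 * U.lapSq := by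
  unfold lapSq aff; rw [norm_aux hr]; ring

theorem gradSq_aff : (U.aff c r hr x0).gradSq = c ^ 2 * (r ^ N)⁻¹ * r ^ 2 * U.gradSq := by
  unfold gradSq aff; rw [Finset.mul_sum]
  refine Finset.sum_congr rfl fun i _ => ?_
  simp only
  rw [norm_aux hr]; ring

theorem pPow_aff (σ : ℝ) :
    (U.aff c r hr x0).pPow σ = |c| ^ (2 * σ + 2) * (r ^ N)⁻¹ * U.pPow σ := by
  unfold pPow aff
  have := integral_aff (fun x => ‖U.u x‖ ^ (2 * σ + 2)) hr x0
  rw [smul_eq_mul] at this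
  rw [mul_assoc, ← this, ← integral_const_mul]
  congr 1; ext x
  rw [norm_mul, Real.mul_rpow (by positivity) (by positivity)]; simp

theorem massSq_nonneg : 0 ≤ U.massSq := integral_nonneg fun _ => by positivity
theorem lapSq_nonneg : 0 ≤ U.lapSq := integral_nonneg fun _ => by positivity
theorem gradSq_nonneg : 0 ≤ U.gradSq :=
  Finset.sum_nonneg fun _ _ => integral_nonneg fun _ => by positivity
theorem pPow_nonneg (σ : ℝ) : 0 ≤ U.pPow σ := integral_nonneg fun _ => by positivity

variable {U}

theorem massSq_pos_iff : 0 < U.massSq ↔ U.Nontriv := by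
  unfold massSq Nontriv
  have hi := (memLp_two_iff_integrable_sq_norm U.u_mem.1).1 U.u_mem
  rw [lt_iff_le_and_ne, and_iff_right (integral_nonneg fun _ => by positivity), ← not_iff_not, ne_eq,
    not_not, not_not, eq_comm, integral_eq_zero_iff_of_nonneg (fun _ => by positivity) hi]
  constructor
  · intro h; filter_upwards [h] with x hx
    simpa using hx
  · intro h; filter_upwards [h] with x hx
    simp [hx]

end H2

end


open MeasureTheory Filter Topology

noncomputable section

open scoped SchwartzMap FourierTransform LineDeriv

theorem lineDeriv_eq_pderivC {N : ℕ} (φ : 𝓢(Esp N, ℂ)) (i : Fin N) :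
    ((∂_{EuclideanSpace.single i (1 : ℝ)} φ : 𝓢(Esp N, ℂ)) : Esp N → ℂ) = pderivC i φ := by
  ext x
  rw [SchwartzMap.lineDerivOp_apply_eq_fderiv]
  rfl

/-- Schwartz functions are approximated by test functions, tested against `L²` functions. -/
theorem schwartz_approx {N : ℕ} (φ : 𝓢(Esp N, ℂ)) :
    ∃ φn : ℕ → Esp N → ℂ, (∀ n, TestFun (φn n)) ∧ ∀ f : Esp N → ℂ, MemLp f 2 volume →
      Tendsto (fun n => ∫ x, f x * φn n x) atTop (𝓝 (∫ x, f x * φ x)) ∧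
      ∀ i, Tendsto (fun n => ∫ x, f x * pderivC i (φn n) x) atTop
        (𝓝 (∫ x, f x * pderivC i φ x)) := by
  let b : ContDiffBump (0 : Esp N) := ⟨1, 2, one_pos, one_lt_two⟩
  let χ : Esp N → ℂ := fun x => ((b x : ℝ) : ℂ)
  have hχ : TestFun χ := by
    refine ⟨Complex.ofRealCLM.contDiff.comp b.contDiff, ?_⟩
    exact b.hasCompactSupport.comp_left (g := fun x : ℝ => (x : ℂ)) (by simp)
  have hχ1 : ∀ x, ‖χ x‖ ≤ 1 := by
    intro x
    simp only [χ, Complex.norm_real, Real.norm_eq_abs, abs_of_nonneg b.nonneg]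
    exact b.le_one
  have hχ0 : χ 0 = 1 := by
    have : b 0 = 1 := b.one_of_mem_closedBall (by simp [b])
    simp [χ, this]
  let r : ℕ → ℝ := fun n => ((n : ℝ) + 1)⁻¹
  have hr : ∀ n, 0 < r n := fun n => by positivity
  have hr1 : ∀ n, r n ≤ 1 := fun n => inv_le_one_of_one_le₀ (by
    have : (0 : ℝ) ≤ n := by positivity
    linarith)
  have hr0 : Tendsto r atTop (𝓝 0) := by
    simpa [r, one_div] using tendsto_one_div_add_atTop_nhds_zero_nat (𝕜 := ℝ)
  have hT : ∀ n, TestFun (fun x => χ (r n • x + 0)) := fun n => hχ.aff (hr n) 0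
  have hφd : ∀ x, DifferentiableAt ℝ φ x := fun x => φ.differentiableAt
  have hφ2 : MemLp φ 2 (volume : Measure (Esp N)) := φ.memLp 2
  have hlim : ∀ x, Tendsto (fun n => χ (r n • x + 0)) atTop (𝓝 1) := by
    intro x
    have h1 : Tendsto (fun n => r n • x + 0) atTop (𝓝 0) := by
      simpa using hr0.smul_const x
    have := (hχ.1.continuous.tendsto 0).comp h1
    rwa [hχ0] at this
  have hder : ∀ n i x, pderivC i (fun x => χ (r n • x + 0) * φ x) x =
      r n * pderivC i χ (r n • x + 0) * φ x + χ (r n • x + 0) * pderivC i φ x := by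
    intro n i x
    rw [← pderivC_aff hχ]
    unfold pderivC
    rw [fderiv_fun_mul ((hT n).1.differentiable (by norm_num) x) (hφd x)]
    simp
    ring
  refine ⟨fun n x => χ (r n • x + 0) * φ x, fun n => ⟨(hT n).1.mul (φ.smooth _), (hT n).2.mul_right⟩, ?_⟩
  intro f hf
  refine ⟨?_, ?_⟩
  · refine tendsto_integral_of_dominated_convergence (fun x => ‖f x * φ x‖) ?_
      (integrable_mul_L2 hf hφ2).norm ?_ ?_
    · intro n
      exact hf.1.mul (((hT n).1.continuous.mul φ.continuous).aestronglyMeasurable)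
    · intro n
      refine Eventually.of_forall fun x => ?_
      rw [norm_mul, norm_mul, norm_mul]
      have := hχ1 (r n • x + 0)
      nlinarith [norm_nonneg (f x), norm_nonneg (φ x), mul_nonneg (norm_nonneg (f x)) (norm_nonneg (φ x))]
    · refine Eventually.of_forall fun x => ?_
      have := ((hlim x).mul_const (φ x)).const_mul (f x)
      simpa using this
  · intro i
    obtain ⟨C, hC⟩ := (hχ.pderivC i).1.continuous.bounded_above_of_compact_support (hχ.pderivC i).2
    have hC0 : 0 ≤ C := (norm_nonneg _).trans (hC 0)
    have hd2 : MemLp (pderivC i φ) 2 (volume : Measure (Esp N)) := by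
      rw [← lineDeriv_eq_pderivC]; exact SchwartzMap.memLp _ 2 volume
    have hdc : Continuous (pderivC i φ) := by
      rw [← lineDeriv_eq_pderivC]; exact SchwartzMap.continuous _
    simp only [hder]
    refine tendsto_integral_of_dominated_convergence (fun x => C * ‖f x * φ x‖ + ‖f x * pderivC i φ x‖) ?_
      (((integrable_mul_L2 hf hφ2).norm.const_mul C).add (integrable_mul_L2 hf hd2).norm) ?_ ?_
    · intro n
      refine hf.1.mul (Continuous.aestronglyMeasurable ?_)
      have h1 := (hχ.pderivC i).1.continuous
      have h2 := hχ.1.continuous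
      have h3 := φ.continuous
      fun_prop
    · intro n
      refine Eventually.of_forall fun x => ?_
      have h1 := hχ1 (r n • x + 0)
      have h2 := hC (r n • x + 0)
      have h3 : ‖(r n : ℂ)‖ ≤ 1 := by
        rw [Complex.norm_real, Real.norm_eq_abs, abs_of_pos (hr n)]; exact hr1 n
      calc _ ≤ ‖f x‖ * (‖(r n : ℂ)‖ * ‖pderivC i χ (r n • x + 0)‖ * ‖φ x‖ + ‖χ (r n • x + 0)‖ * ‖pderivC i φ x‖) := by
            rw [norm_mul]
            gcongr
            refine (norm_add_le _ _).trans (le_of_eq ?_)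
            simp only [norm_mul]
        _ ≤ ‖f x‖ * (1 * C * ‖φ x‖ + 1 * ‖pderivC i φ x‖) := by gcongr
        _ = _ := by simp only [norm_mul]; ring
    · refine Eventually.of_forall fun x => ?_
      have h1 : Tendsto (fun n => (r n : ℂ) * pderivC i χ (r n • x + 0) * φ x) atTop (𝓝 0) := by
        rw [tendsto_zero_iff_norm_tendsto_zero]
        have : Tendsto (fun n => r n * (C * ‖φ x‖)) atTop (𝓝 0) := by
          simpa using hr0.mul_const (C * ‖φ x‖)
        refine squeeze_zero (fun _ => norm_nonneg _) (fun n => ?_) this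
        rw [norm_mul, norm_mul, Complex.norm_real, Real.norm_eq_abs, abs_of_pos (hr n), mul_assoc]
        have := hC (r n • x + 0)
        have := (hr n).le
        gcongr
      have := (h1.add ((hlim x).mul_const (pderivC i φ x))).const_mul (f x)
      simpa using this

theorem weakGrad_schwartz {N : ℕ} (U : H2 N) (i : Fin N) (φ : 𝓢(Esp N, ℂ)) :
    ∫ x, U.u x * pderivC i φ x = - ∫ x, U.grad i x * φ x := by
  obtain ⟨φn, hT, h⟩ := schwartz_approx φ
  have h1 := (h _ U.u_mem).2 i
  have h2 := (h _ (U.grad_mem i)).1.neg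
  refine tendsto_nhds_unique h1 (h2.congr fun n => ?_)
  rw [U.grad_spec i _ (hT n)]

theorem weakLap_test {N : ℕ} (U : H2 N) (φ : Esp N → ℂ) (hφ : TestFun φ) :
    ∑ i, ∫ x, U.grad i x * pderivC i φ x = - ∫ x, U.lapl x * φ x := by
  rw [← U.lapl_spec φ hφ]
  unfold lapC
  simp only [Finset.mul_sum]
  rw [integral_finsetSum]
  · rw [← Finset.sum_neg_distrib]
    refine Finset.sum_congr rfl fun i _ => ?_
    rw [U.grad_spec i _ (hφ.pderivC i), neg_neg]
  · intro i _
    exact integrable_mul_L2 U.u_mem (((hφ.pderivC i).pderivC i).memLp 2)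

theorem weakLap_schwartz {N : ℕ} (U : H2 N) (φ : 𝓢(Esp N, ℂ)) :
    ∑ i, ∫ x, U.grad i x * pderivC i φ x = - ∫ x, U.lapl x * φ x := by
  obtain ⟨φn, hT, h⟩ := schwartz_approx φ
  have h1 := tendsto_finsetSum Finset.univ (fun i _ => (h _ (U.grad_mem i)).2 i)
  have h2 := (h _ U.lapl_mem).1.neg
  refine tendsto_nhds_unique h1 (h2.congr fun n => ?_)
  rw [weakLap_test U _ (hT n)]

end


open MeasureTheory Filter Topology

noncomputable section

open scoped SchwartzMap FourierTransform LineDeriv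

abbrev L2m {N : ℕ} (f : Esp N → ℂ) : Prop := MemLp f 2 (volume : Measure (Esp N))

/-- The `L²` Fourier transform as a function. -/
def FT {N : ℕ} {f : Esp N → ℂ} (hf : L2m f) : Esp N → ℂ :=
  ⇑(𝓕 (MemLp.toLp f hf) : Lp (α := Esp N) ℂ 2 volume)

theorem FT_mem {N : ℕ} {f : Esp N → ℂ} (hf : L2m f) : L2m (FT hf) := Lp.memLp _

theorem FT_pair {N : ℕ} {f : Esp N → ℂ} (hf : L2m f) (φ : 𝓢(Esp N, ℂ)) :
    ∫ x, φ x * FT hf x = ∫ x, (𝓕 φ) x * f x := by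
  have h := congrArg (fun T => T φ) (Lp.fourier_toTemperedDistribution_eq (hf.toLp f))
  simp only [TemperedDistribution.fourier_apply, Lp.toTemperedDistribution_apply, smul_eq_mul] at h
  unfold FT
  rw [← h]
  refine integral_congr_ae ?_
  filter_upwards [hf.coeFn_toLp] with x hx
  rw [hx]

theorem FT_pair' {N : ℕ} {f : Esp N → ℂ} (hf : L2m f) (φ : 𝓢(Esp N, ℂ)) :
    ∫ x, φ x * f x = ∫ x, (𝓕⁻ φ) x * FT hf x := by
  rw [FT_pair, FourierTransform.fourier_fourierInv_eq]

theorem ae_eq_of_schwartz {N : ℕ} {f g : Esp N → ℂ} (hf : LocallyIntegrable f volume)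
    (hg : LocallyIntegrable g volume)
    (h : ∀ φ : 𝓢(Esp N, ℂ), ∫ x, φ x * f x = ∫ x, φ x * g x) : f =ᵐ[volume] g := by
  refine ae_eq_of_integral_contDiff_smul_eq hf hg ?_
  intro k k_smooth k_cpt
  have hg₁ : HasCompactSupport (Complex.ofRealCLM ∘ k) := k_cpt.comp_left rfl
  have hg₂ : ContDiff ℝ (⊤ : ℕ∞) (Complex.ofRealCLM ∘ k) := by fun_prop
  have := h (hg₁.toSchwartzMap hg₂)
  simpa using this

theorem L2m.locInt {N : ℕ} {f : Esp N → ℂ} (hf : L2m f) : LocallyIntegrable f volume :=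
  MemLp.locallyIntegrable hf (by norm_num)

theorem locInt_mul {N : ℕ} {f h : Esp N → ℂ} (hf : L2m f) (hh : Continuous h) :
    LocallyIntegrable (fun x => h x * f x) volume := by
  have := (hf.locInt.locallyIntegrableOn Set.univ).continuousOn_mul hh.continuousOn
    isOpen_univ.isLocallyClosed
  exact locallyIntegrableOn_univ.1 this

theorem FT_norm {N : ℕ} {f : Esp N → ℂ} (hf : L2m f) : ∫ x, ‖FT hf x‖ ^ 2 = ∫ x, ‖f x‖ ^ 2 := by
  have h1 := Lp.norm_fourier_eq (hf.toLp f)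
  have h2 : ∀ F : Lp (α := Esp N) ℂ 2, ∫ x, ‖F x‖ ^ 2 = ‖F‖ ^ 2 := by
    intro F
    have := L2.inner_def (𝕜 := ℂ) F F
    rw [inner_self_eq_norm_sq_to_K] at this
    simp only [inner_self_eq_norm_sq_to_K] at this
    have h3 : (∫ x, ((‖F x‖ : ℂ) ^ 2)) = ((∫ x, ‖F x‖ ^ 2 : ℝ) : ℂ) := by
      rw [← integral_complex_ofReal]; push_cast; rfl
    have h4 : ((‖F‖ ^ 2 : ℝ) : ℂ) = ((∫ x, ‖F x‖ ^ 2 : ℝ) : ℂ) := by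
      rw [← h3]; push_cast; exact this
    exact_mod_cast h4.symm
  unfold FT
  rw [h2, h1, ← h2]
  refine integral_congr_ae ?_
  filter_upwards [hf.coeFn_toLp] with x hx
  rw [hx]

theorem FT_inj {N : ℕ} {f g : Esp N → ℂ} (hf : L2m f) (hg : L2m g) (h : FT hf =ᵐ[volume] FT hg) :
    f =ᵐ[volume] g := by
  refine ae_eq_of_schwartz hf.locInt hg.locInt fun φ => ?_
  rw [FT_pair' hf, FT_pair' hg]
  refine integral_congr_ae ?_
  filter_upwards [h] with x hx
  rw [hx]

/-- the symbol `2πi ξ_i`. -/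
def symb {N : ℕ} (i : Fin N) (x : Esp N) : ℂ := 2 * Real.pi * Complex.I * (x i : ℂ)

theorem symb_cont {N : ℕ} (i : Fin N) : Continuous (symb i : Esp N → ℂ) := by
  unfold symb; fun_prop

theorem pderiv_fourier {N : ℕ} (i : Fin N) (φ : 𝓢(Esp N, ℂ)) :
    ∃ ψ : 𝓢(Esp N, ℂ), (∀ x, ψ x = - (symb i x * φ x)) ∧ ∀ x, pderivC i (⇑(𝓕 φ : 𝓢(Esp N, ℂ))) x = (𝓕 ψ) x := by
  have h := SchwartzMap.lineDerivOp_fourier_eq φ (EuclideanSpace.single i (1:ℝ))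
  refine ⟨-(2 * Real.pi * Complex.I) • (SchwartzMap.smulLeftCLM ℂ
    fun x : Esp N => inner ℝ x (EuclideanSpace.single i (1:ℝ))) φ, ?_, fun x => ?_⟩
  rotate_left
  · rw [← lineDeriv_eq_pderivC, h]
  · intro x
    have : (fun y : Esp N => inner ℝ y (EuclideanSpace.single i (1:ℝ))).HasTemperateGrowth := by fun_prop
    simp [this, symb]
    simp only [EuclideanSpace.inner_single_right, conj_trivial, one_mul]
    ring

theorem fourierInv_pderiv {N : ℕ} (i : Fin N) (φ ψ : 𝓢(Esp N, ℂ)) (h0 : ∀ x, ψ x = pderivC i φ x) (x : Esp N):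
    (𝓕⁻ ψ) x = - (symb i x * (𝓕⁻ φ) x) := by
  have h := SchwartzMap.fourierInv_lineDerivOp_eq φ (EuclideanSpace.single i (1:ℝ))
  have : ψ = ∂_{EuclideanSpace.single i (1:ℝ)} φ := by
    ext x; rw [h0, ← lineDeriv_eq_pderivC]
  rw [this, h]
  have : (fun y : Esp N => inner ℝ y (EuclideanSpace.single i (1:ℝ))).HasTemperateGrowth := by fun_prop
  simp [this, symb]
  simp only [EuclideanSpace.inner_single_right, conj_trivial, one_mul]
  ring

theorem FT_grad {N : ℕ} (U : H2 N) (i : Fin N) :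
    FT (U.grad_mem i) =ᵐ[volume] fun x => symb i x * FT U.u_mem x := by
  refine ae_eq_of_schwartz (FT_mem _).locInt (locInt_mul (FT_mem _) (symb_cont i)) fun φ => ?_
  rw [FT_pair]
  obtain ⟨ψ, h1, h2⟩ := pderiv_fourier i φ
  have h3 := weakGrad_schwartz U i (𝓕 φ)
  simp only [h2] at h3
  have h4 := FT_pair U.u_mem ψ
  simp only [h1] at h4
  have e1 : ∫ x, (𝓕 φ) x * U.grad i x = ∫ x, U.grad i x * (𝓕 φ) x := by
    congr 1; ext x; ring
  have e2 : ∫ x, U.u x * (𝓕 ψ) x = ∫ x, (𝓕 ψ) x * U.u x := by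
    congr 1; ext x; ring
  rw [e1, neg_eq_iff_eq_neg.1 h3.symm, e2, ← h4, ← integral_neg]
  congr 1; ext x; ring

theorem FT_lapl {N : ℕ} (U : H2 N) :
    FT U.lapl_mem =ᵐ[volume] fun x => ∑ i, symb i x * FT (U.grad_mem i) x := by
  refine ae_eq_of_schwartz (FT_mem _).locInt ?_ fun φ => ?_
  · exact locallyIntegrable_finsetSum _ fun i _ => locInt_mul (FT_mem _) (symb_cont i)
  rw [FT_pair]
  choose ψ h1 h2 using fun i => pderiv_fourier i φ
  have h3 := weakLap_schwartz U (𝓕 φ)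
  simp only [h2] at h3
  have e1 : ∫ x, (𝓕 φ) x * U.lapl x = ∫ x, U.lapl x * (𝓕 φ) x := by
    congr 1; ext x; ring
  rw [e1, neg_eq_iff_eq_neg.1 h3.symm]
  simp only [Finset.mul_sum]
  rw [integral_finsetSum, ← Finset.sum_neg_distrib]
  · refine Finset.sum_congr rfl fun i _ => ?_
    have h4 := FT_pair (U.grad_mem i) (ψ i)
    simp only [h1] at h4
    have e2 : ∫ x, U.grad i x * (𝓕 (ψ i)) x = ∫ x, (𝓕 (ψ i)) x * U.grad i x := by
      congr 1; ext x; ring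
    rw [e2, ← h4, ← integral_neg]
    congr 1; ext x; ring
  · intro i _
    have := integrable_mul_L2 ((ψ i).memLp 2 volume) (FT_mem (U.grad_mem i))
    refine this.neg.congr (Eventually.of_forall fun x => ?_)
    simp only [Pi.neg_apply, h1]; ring

theorem H2_of_FT {N : ℕ} {u : Esp N → ℂ} {g : Fin N → Esp N → ℂ} {l : Esp N → ℂ}
    (hu : L2m u) (hg : ∀ i, L2m (g i)) (hl : L2m l)
    (h1 : ∀ i, FT (hg i) =ᵐ[volume] fun x => symb i x * FT hu x)
    (h2 : FT hl =ᵐ[volume] fun x => ∑ i, symb i x * FT (hg i) x) :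
    (∀ i, IsWeakPDeriv u i (g i)) ∧ IsWeakLap u l := by
  have key : ∀ i, ∀ φ : Esp N → ℂ, TestFun φ → ∫ x, u x * pderivC i φ x = - ∫ x, g i x * φ x := by
    intro i φ hφ
    have hp := hφ.pderivC i
    set Φ := hφ.2.toSchwartzMap hφ.1
    set Ψ := hp.2.toSchwartzMap hp.1
    have a1 := FT_pair' hu Ψ
    have a2 := FT_pair' (hg i) Φ
    have a3 : ∀ x, (𝓕⁻ Ψ) x = - (symb i x * (𝓕⁻ Φ) x) := fourierInv_pderiv i Φ Ψ (fun x => rfl)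
    have e1 : ∫ x, u x * pderivC i φ x = ∫ x, Ψ x * u x := by
      congr 1; ext x; exact mul_comm _ _
    have e2 : ∫ x, g i x * φ x = ∫ x, Φ x * g i x := by
      congr 1; ext x; exact mul_comm _ _
    rw [e1, e2, a1, a2, ← integral_neg]
    refine integral_congr_ae ?_
    filter_upwards [h1 i] with x hx
    rw [a3, hx]; ring
  refine ⟨key, ?_⟩
  intro φ hφ
  unfold lapC
  simp only [Finset.mul_sum]
  rw [integral_finsetSum]
  · have : ∀ i, ∫ x, u x * pderivC i (pderivC i φ) x = - ∫ x, g i x * pderivC i φ x :=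
      fun i => key i _ (hφ.pderivC i)
    simp only [this]
    set Φ := hφ.2.toSchwartzMap hφ.1
    have e2 : ∫ x, l x * φ x = ∫ x, Φ x * l x := by
      congr 1; ext x; exact mul_comm _ _
    rw [e2, FT_pair' hl]
    have e3 : ∫ x, (𝓕⁻ Φ) x * FT hl x = ∫ x, ∑ i, (symb i x * (𝓕⁻ Φ) x) * FT (hg i) x := by
      refine integral_congr_ae ?_
      filter_upwards [h2] with x hx
      rw [hx, Finset.mul_sum]
      refine Finset.sum_congr rfl fun i _ => by ring
    have e4 : ∀ i, ∫ x, g i x * pderivC i φ x = - ∫ x, (symb i x * (𝓕⁻ Φ) x) * FT (hg i) x ∧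
        Integrable (fun x => (symb i x * (𝓕⁻ Φ) x) * FT (hg i) x) volume := by
      intro i
      have hp := hφ.pderivC i
      set Ψ := hp.2.toSchwartzMap hp.1
      have a1 := FT_pair' (hg i) Ψ
      have a3 : ∀ x, (𝓕⁻ Ψ) x = - (symb i x * (𝓕⁻ Φ) x) := fourierInv_pderiv i Φ Ψ (fun x => rfl)
      have e1 : ∫ x, g i x * pderivC i φ x = ∫ x, Ψ x * g i x := by
        congr 1; ext x; exact mul_comm _ _
      constructor
      · rw [e1, a1, ← integral_neg]
        congr 1; ext x; rw [a3]; ring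
      · have := integrable_mul_L2 ((𝓕⁻ Ψ).memLp 2 volume) (FT_mem (hg i))
        refine this.neg.congr (Eventually.of_forall fun x => ?_)
        simp only [Pi.neg_apply, a3]; ring
    rw [e3, integral_finsetSum _ (fun i _ => (e4 i).2)]
    refine Finset.sum_congr rfl fun i _ => ?_
    rw [(e4 i).1, neg_neg]
  · intro i _
    exact integrable_mul_L2 hu (((hφ.pderivC i).pderivC i).memLp 2)

end


open MeasureTheory Filter Topology

noncomputable section

open scoped SchwartzMap FourierTransform LineDeriv

theorem FT_congr {N : ℕ} {f g : Esp N → ℂ} (hf : L2m f) (hg : L2m g) (h : f =ᵐ[volume] g) :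
    FT hf = FT hg := by
  unfold FT
  rw [(MemLp.toLp_eq_toLp_iff hf hg).2 h]

theorem FT_sub {N : ℕ} {f g : Esp N → ℂ} (hf : L2m f) (hg : L2m g) (h : L2m (fun x => f x - g x)) :
    FT h =ᵐ[volume] fun x => FT hf x - FT hg x := by
  refine ae_eq_of_schwartz (FT_mem _).locInt ((FT_mem hf).locInt.sub (FT_mem hg).locInt) fun φ => ?_
  have i1 := integrable_mul_L2 (φ.memLp 2 volume) (FT_mem hf)
  have i2 := integrable_mul_L2 (φ.memLp 2 volume) (FT_mem hg)
  have i3 := integrable_mul_L2 ((𝓕 φ).memLp 2 volume) hf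
  have i4 := integrable_mul_L2 ((𝓕 φ).memLp 2 volume) hg
  simp only [mul_sub]
  rw [integral_sub i1 i2, FT_pair, FT_pair, FT_pair, ← integral_sub i3 i4]
  simp only [mul_sub]

theorem L2m.int_sq {N : ℕ} {f : Esp N → ℂ} (hf : L2m f) :
    Integrable (fun x => ‖f x‖ ^ 2) volume := by
  simpa using hf.integrable_norm_pow (by norm_num)

theorem cauchy_schwarz {N : ℕ} {f g : Esp N → ℂ} (hf : L2m f) (hg : L2m g) :
    (∫ x, ‖f x‖ * ‖g x‖) ^ 2 ≤ (∫ x, ‖f x‖ ^ 2) * ∫ x, ‖g x‖ ^ 2 := by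
  have h := integral_mul_norm_le_Lp_mul_Lq (μ := (volume : Measure (Esp N))) (f := f) (g := g)
    Real.HolderConjugate.two_two (by simpa using hf) (by simpa using hg)
  have h0 : 0 ≤ ∫ x, ‖f x‖ * ‖g x‖ := integral_nonneg fun x => by positivity
  have h1 : 0 ≤ ∫ x, ‖f x‖ ^ 2 := integral_nonneg fun x => by positivity
  have h2 : 0 ≤ ∫ x, ‖g x‖ ^ 2 := integral_nonneg fun x => by positivity
  simp only [Real.rpow_two, ← Real.sqrt_eq_rpow] at h
  calc _ ≤ (√(∫ x, ‖f x‖ ^ 2) * √(∫ x, ‖g x‖ ^ 2)) ^ 2 := by gcongr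
    _ = _ := by rw [mul_pow, Real.sq_sqrt h1, Real.sq_sqrt h2]

theorem norm_symb_sq {N : ℕ} (i : Fin N) (x : Esp N) :
    ‖symb i x‖ ^ 2 = 4 * Real.pi ^ 2 * (x i) ^ 2 := by
  unfold symb
  simp only [norm_mul, mul_pow, Complex.norm_real, Real.norm_eq_abs, sq_abs, Complex.norm_I, Complex.norm_ofNat]; ring

theorem FT_lapl' {N : ℕ} (U : H2 N) :
    FT U.lapl_mem =ᵐ[volume] fun x => -((4 * Real.pi ^ 2 * ‖x‖ ^ 2 : ℝ) : ℂ) * FT U.u_mem x := by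
  have h := eventually_all.2 (fun i => FT_grad U i)
  filter_upwards [FT_lapl U, h] with x h1 h2
  rw [h1]
  simp only [h2, ← mul_assoc]
  rw [← Finset.sum_mul]
  congr 1
  rw [EuclideanSpace.norm_sq_eq]
  push_cast
  rw [Finset.mul_sum, ← Finset.sum_neg_distrib]
  refine Finset.sum_congr rfl fun i _ => ?_
  unfold symb
  have : (‖x i‖ : ℂ) ^ 2 = (x i : ℂ) ^ 2 := by
    rw [← Complex.ofReal_pow, Real.norm_eq_abs, sq_abs, Complex.ofReal_pow]
  rw [this]
  ring_nf
  rw [Complex.I_sq]; ring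

theorem norm_FT_lapl {N : ℕ} (U : H2 N) :
    ∀ᵐ x, ‖FT U.lapl_mem x‖ = 4 * Real.pi ^ 2 * ‖x‖ ^ 2 * ‖FT U.u_mem x‖ := by
  filter_upwards [FT_lapl' U] with x hx
  rw [hx, norm_mul, norm_neg, Complex.norm_real, Real.norm_of_nonneg (by positivity)]

namespace H2
variable {N : ℕ}

theorem grad_interp (U : H2 N) : U.gradSq ^ 2 ≤ U.lapSq * U.massSq := by
  have h : U.gradSq = ∫ x, ‖FT U.lapl_mem x‖ * ‖FT U.u_mem x‖ := by
    unfold gradSq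
    simp only [← FT_norm (U.grad_mem _)]
    rw [← integral_finsetSum _ (fun i _ => (FT_mem _).int_sq)]
    refine integral_congr_ae ?_
    have h := eventually_all.2 (fun i => FT_grad U i)
    filter_upwards [norm_FT_lapl U, h] with x h1 h2
    simp only [h1, h2, norm_mul, mul_pow, norm_symb_sq]
    rw [← Finset.sum_mul, ← Finset.mul_sum, EuclideanSpace.norm_sq_eq]
    simp only [Real.norm_eq_abs, sq_abs]; ring
  rw [h]
  refine (cauchy_schwarz (FT_mem _) (FT_mem _)).trans ?_
  rw [FT_norm, FT_norm]; rfl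

theorem lap_pos (hN : 1 ≤ N) (U : H2 N) (hU : U.Nontriv) : 0 < U.lapSq := by
  refine lt_of_le_of_ne U.lapSq_nonneg fun h0 => hU ?_
  have h1 : ∫ x, ‖FT U.lapl_mem x‖ ^ 2 = 0 := by rw [FT_norm]; exact h0.symm
  rw [integral_eq_zero_iff_of_nonneg (fun x => by positivity) (FT_mem _).int_sq] at h1
  have : Nonempty (Fin N) := ⟨⟨0, hN⟩⟩
  have hz : ∀ᵐ x : Esp N, x ≠ 0 := by
    simp [ae_iff]
  have h2 : ∫ x, ‖FT U.u_mem x‖ ^ 2 = 0 := by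
    refine integral_eq_zero_of_ae ?_
    filter_upwards [h1, norm_FT_lapl U, hz] with x a b c
    simp only [Pi.zero_apply, b] at a ⊢
    have := norm_pos_iff.2 c
    have hp := Real.pi_pos
    have : ‖FT U.u_mem x‖ = 0 := by
      by_contra hne
      exact absurd a (by positivity)
    rw [this]; norm_num
  by_contra hne
  have := U.massSq_pos_iff.2 hne
  rw [massSq, ← FT_norm U.u_mem, h2] at this
  exact lt_irrefl _ this

end H2

/-- Smoothing operator with kernel the Fourier transform of `Φ`. -/
def Sop {N : ℕ} (Φ : 𝓢(Esp N, ℂ)) (f : Esp N → ℂ) (x : Esp N) : ℂ := ∫ y, (𝓕 Φ) (y - x) * f y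

theorem modul_schwartz {N : ℕ} (Φ : 𝓢(Esp N, ℂ)) (hΦ : HasCompactSupport Φ) (x : Esp N) :
    ∃ ψ : 𝓢(Esp N, ℂ), (∀ ξ, ψ ξ = Complex.exp (((2 * Real.pi * inner ℝ ξ x : ℝ) : ℂ) * Complex.I) * Φ ξ) ∧
      ∀ y, (𝓕 ψ) y = (𝓕 Φ) (y - x) := by
  have h1 : HasCompactSupport (fun ξ : Esp N => Complex.exp (((2 * Real.pi * inner ℝ ξ x : ℝ) : ℂ) * Complex.I) * Φ ξ) :=
    hΦ.mul_left
  have h2 : ContDiff ℝ (⊤ : ℕ∞) (fun ξ : Esp N => Complex.exp (((2 * Real.pi * inner ℝ ξ x : ℝ) : ℂ) * Complex.I) * Φ ξ) := by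
    refine ContDiff.mul ?_ Φ.smooth'
    have : ContDiff ℝ (⊤ : ℕ∞) (fun ξ : Esp N => ((2 * Real.pi * inner ℝ ξ x : ℝ) : ℂ)) := by
      have h : ContDiff ℝ (⊤ : ℕ∞) (fun ξ : Esp N => (2 * Real.pi * inner ℝ ξ x : ℝ)) := contDiff_const.mul (contDiff_id.inner ℝ contDiff_const)
      exact Complex.ofRealCLM.contDiff.comp h
    fun_prop
  refine ⟨h1.toSchwartzMap h2, fun ξ => rfl, fun y => ?_⟩
  rw [SchwartzMap.fourier_coe, SchwartzMap.fourier_coe, Real.fourier_eq', Real.fourier_eq']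
  congr 1
  ext v
  simp only [smul_eq_mul, HasCompactSupport.toSchwartzMap_toFun]
  rw [← mul_assoc, ← Complex.exp_add, inner_sub_right]
  congr 2
  push_cast; ring

theorem Sop_eq {N : ℕ} (Φ : 𝓢(Esp N, ℂ)) (hΦ : HasCompactSupport Φ) {f : Esp N → ℂ} (hf : L2m f) (x : Esp N) :
    Sop Φ f x = 𝓕⁻ (fun ξ => Φ ξ * FT hf ξ) x := by
  obtain ⟨ψ, h1, h2⟩ := modul_schwartz Φ hΦ x
  unfold Sop
  simp only [← h2]
  rw [← FT_pair hf, Real.fourierInv_eq']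
  congr 1; ext ξ; rw [h1, smul_eq_mul]; ring

theorem bdd_mul_L2m {N : ℕ} (Φ : 𝓢(Esp N, ℂ)) (C : ℝ) (hC : ∀ x, ‖Φ x‖ ≤ C) {f : Esp N → ℂ} (hf : L2m f) :
    L2m (fun x => Φ x * f x) := by
  refine MemLp.of_le_mul (c := C) hf (Φ.continuous.aestronglyMeasurable.mul hf.1) ?_
  refine Eventually.of_forall fun x => ?_
  rw [norm_mul]
  gcongr
  exact hC x

theorem Sop_FT {N : ℕ} (Φ : 𝓢(Esp N, ℂ)) (hΦ : HasCompactSupport Φ) {f : Esp N → ℂ} (hf : L2m f) :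
    ∃ h : L2m (Sop Φ f), FT h =ᵐ[volume] fun ξ => Φ ξ * FT hf ξ := by
  obtain ⟨C, hC⟩ := Φ.continuous.bounded_above_of_compact_support hΦ
  have hh := bdd_mul_L2m Φ C hC (FT_mem hf)
  have hIntg : Integrable (fun ξ => Φ ξ * FT hf ξ) volume :=
    integrable_mul_L2 (Φ.memLp 2 volume) (FT_mem hf)
  set g : Lp (α := Esp N) ℂ 2 volume := 𝓕⁻ (MemLp.toLp _ hh) with hg
  have hgm : L2m g := Lp.memLp g
  have hFg : FT hgm =ᵐ[volume] fun ξ => Φ ξ * FT hf ξ := by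
    have : FT hgm = ⇑(MemLp.toLp _ hh) := by
      rw [FT, Lp.toLp_coeFn, hg, FourierTransform.fourier_fourierInv_eq]
    rw [this]
    exact MemLp.coeFn_toLp hh
  have hS : Sop Φ f = 𝓕⁻ (fun ξ => Φ ξ * FT hf ξ) := funext fun x => Sop_eq Φ hΦ hf x
  have hcont : Continuous (Sop Φ f) := by
    rw [hS, show 𝓕⁻ (fun ξ => Φ ξ * FT hf ξ) = fun x => 𝓕 (fun ξ => Φ ξ * FT hf ξ) (-x) from
      funext fun x => Real.fourierInv_eq_fourier_neg _ x]
    have := VectorFourier.fourierIntegral_continuous (L := innerₗ (Esp N)) Real.continuous_fourierChar continuous_inner hIntg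
    exact this.comp continuous_neg
  have hae : Sop Φ f =ᵐ[volume] g := by
    refine ae_eq_of_schwartz hcont.locallyIntegrable hgm.locInt fun φ => ?_
    rw [FT_pair' hgm φ, hS]
    have hcL : Continuous fun p : Esp N × Esp N => (-innerₗ (Esp N)) p.1 p.2 := (continuous_inner (𝕜 := ℝ) (E := Esp N)).neg
    have key := VectorFourier.integral_fourierIntegral_smul_eq_flip (L := -innerₗ (Esp N)) (μ := volume) (ν := volume)
      Real.continuous_fourierChar hcL φ.integrable hIntg
    have e1 : ∫ x, (𝓕⁻ φ) x * FT hgm x = ∫ x, (𝓕⁻ φ) x * (Φ x * FT hf x) := by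
      refine integral_congr_ae ?_
      filter_upwards [hFg] with x hx
      rw [hx]
    rw [e1, SchwartzMap.fourierInv_coe]
    have hfl : (-innerₗ (Esp N)).flip = -innerₗ (Esp N) := by
      ext x y; simp [real_inner_comm]
    rw [hfl] at key
    exact key.symm
  have hm : L2m (Sop Φ f) := hgm.ae_eq hae.symm
  refine ⟨hm, ?_⟩
  rw [FT_congr hm hgm hae]
  exact hFg

/-- Smoothing of an `H²` function. -/
def H2.smooth {N : ℕ} (Φ : 𝓢(Esp N, ℂ)) (hΦ : HasCompactSupport Φ) (U : H2 N) : H2 N where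
  u := Sop Φ U.u
  grad i := Sop Φ (U.grad i)
  lapl := Sop Φ U.lapl
  u_mem := (Sop_FT Φ hΦ U.u_mem).1
  grad_mem i := (Sop_FT Φ hΦ (U.grad_mem i)).1
  lapl_mem := (Sop_FT Φ hΦ U.lapl_mem).1
  grad_spec := by
    refine (H2_of_FT (Sop_FT Φ hΦ U.u_mem).1 (fun i => (Sop_FT Φ hΦ (U.grad_mem i)).1) (Sop_FT Φ hΦ U.lapl_mem).1 ?_ ?_).1
    · intro i
      filter_upwards [(Sop_FT Φ hΦ (U.grad_mem i)).2, (Sop_FT Φ hΦ U.u_mem).2, FT_grad U i] with x h1 h2 h3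
      rw [h1, h2, h3]; ring
    · have h := eventually_all.2 (fun i => (Sop_FT Φ hΦ (U.grad_mem i)).2)
      filter_upwards [(Sop_FT Φ hΦ U.lapl_mem).2, h, FT_lapl U] with x h1 h2 h3
      simp only [h1, h2, h3, Finset.mul_sum]
      exact Finset.sum_congr rfl fun i _ => by ring
  lapl_spec := by
    refine (H2_of_FT (Sop_FT Φ hΦ U.u_mem).1 (fun i => (Sop_FT Φ hΦ (U.grad_mem i)).1) (Sop_FT Φ hΦ U.lapl_mem).1 ?_ ?_).2
    · intro i
      filter_upwards [(Sop_FT Φ hΦ (U.grad_mem i)).2, (Sop_FT Φ hΦ U.u_mem).2, FT_grad U i] with x h1 h2 h3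
      rw [h1, h2, h3]; ring
    · have h := eventually_all.2 (fun i => (Sop_FT Φ hΦ (U.grad_mem i)).2)
      filter_upwards [(Sop_FT Φ hΦ U.lapl_mem).2, h, FT_lapl U] with x h1 h2 h3
      simp only [h1, h2, h3, Finset.mul_sum]
      exact Finset.sum_congr rfl fun i _ => by ring

/-- cutoff functions -/
theorem exists_cutoff (N : ℕ) (R : ℝ) (hR : 0 < R) : ∃ Φ : 𝓢(Esp N, ℂ), HasCompactSupport Φ ∧
    (∀ x, ‖Φ x‖ ≤ 1) ∧ (∀ x, ‖1 - Φ x‖ ≤ 1) ∧ ∀ x, ‖x‖ ≤ R → Φ x = 1 := by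
  let b : ContDiffBump (0 : Esp N) := ⟨R, 2 * R, hR, by linarith⟩
  have hg₁ : HasCompactSupport (Complex.ofRealCLM ∘ b) := b.hasCompactSupport.comp_left rfl
  have hg₂ : ContDiff ℝ (⊤ : ℕ∞) (Complex.ofRealCLM ∘ b) := by
    have := b.contDiff (n := (⊤ : ℕ∞))
    fun_prop
  refine ⟨hg₁.toSchwartzMap hg₂, hg₁, fun x => ?_, fun x => ?_, fun x hx => ?_⟩
  · have h0 := b.nonneg (x := x)
    have h1 := b.le_one (x := x)
    simp [abs_of_nonneg h0, h1]
  · have h0 := b.nonneg (x := x)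
    have h1 := b.le_one (x := x)
    simp only [HasCompactSupport.toSchwartzMap_toFun, Function.comp, Complex.ofRealCLM_apply]
    rw [← Complex.ofReal_one, ← Complex.ofReal_sub, Complex.norm_real, Real.norm_of_nonneg (by linarith)]
    linarith
  · have := b.one_of_mem_closedBall (x := x) (by simpa using hx)
    simp [this]

namespace H2
variable {N : ℕ} (Φ : 𝓢(Esp N, ℂ)) (hΦ : HasCompactSupport Φ) (U : H2 N)

theorem smooth_mass_le (h1 : ∀ x, ‖Φ x‖ ≤ 1) : (U.smooth Φ hΦ).massSq ≤ U.massSq := by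
  unfold massSq
  rw [← FT_norm U.u_mem, ← FT_norm (U.smooth Φ hΦ).u_mem]
  refine integral_mono_ae (FT_mem _).int_sq (FT_mem _).int_sq ?_
  filter_upwards [(Sop_FT Φ hΦ U.u_mem).2] with x hx
  change ‖FT (Sop_FT Φ hΦ U.u_mem).1 x‖ ^ 2 ≤ _
  rw [hx, norm_mul]
  gcongr
  exact mul_le_of_le_one_left (norm_nonneg _) (h1 x)

theorem smooth_lap_le (h1 : ∀ x, ‖Φ x‖ ≤ 1) : (U.smooth Φ hΦ).lapSq ≤ U.lapSq := by
  unfold lapSq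
  rw [← FT_norm U.lapl_mem, ← FT_norm (U.smooth Φ hΦ).lapl_mem]
  refine integral_mono_ae (FT_mem _).int_sq (FT_mem _).int_sq ?_
  filter_upwards [(Sop_FT Φ hΦ U.lapl_mem).2] with x hx
  change ‖FT (Sop_FT Φ hΦ U.lapl_mem).1 x‖ ^ 2 ≤ _
  rw [hx, norm_mul]
  gcongr
  exact mul_le_of_le_one_left (norm_nonneg _) (h1 x)

theorem sub_smooth_lap_le (h1 : ∀ x, ‖1 - Φ x‖ ≤ 1) : (U.sub (U.smooth Φ hΦ)).lapSq ≤ U.lapSq := by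
  unfold lapSq
  rw [← FT_norm U.lapl_mem, ← FT_norm (U.sub (U.smooth Φ hΦ)).lapl_mem]
  refine integral_mono_ae (FT_mem _).int_sq (FT_mem _).int_sq ?_
  filter_upwards [(Sop_FT Φ hΦ U.lapl_mem).2, FT_sub U.lapl_mem (U.smooth Φ hΦ).lapl_mem
    (U.sub (U.smooth Φ hΦ)).lapl_mem] with x hx hy
  change ‖FT (U.sub (U.smooth Φ hΦ)).lapl_mem x‖ ^ 2 ≤ _
  have hy' : FT (U.sub (U.smooth Φ hΦ)).lapl_mem x = FT U.lapl_mem x - FT (Sop_FT Φ hΦ U.lapl_mem).1 x := hy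
  rw [hy']
  rw [hx, ← one_sub_mul, norm_mul]
  gcongr
  exact mul_le_of_le_one_left (norm_nonneg _) (h1 x)

theorem sub_smooth_mass_le {R : ℝ} (hR : 0 < R) (h1 : ∀ x, ‖1 - Φ x‖ ≤ 1)
    (h2 : ∀ x, ‖x‖ ≤ R → Φ x = 1) : (U.sub (U.smooth Φ hΦ)).massSq ≤ U.lapSq / R ^ 4 := by
  unfold lapSq massSq
  rw [← FT_norm U.lapl_mem, ← FT_norm (U.sub (U.smooth Φ hΦ)).u_mem, ← integral_div]
  refine integral_mono_ae (FT_mem _).int_sq ((FT_mem _).int_sq.div_const _) ?_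
  filter_upwards [(Sop_FT Φ hΦ U.u_mem).2, FT_sub U.u_mem (U.smooth Φ hΦ).u_mem
    (U.sub (U.smooth Φ hΦ)).u_mem, norm_FT_lapl U] with x hx hy hz
  change ‖FT (U.sub (U.smooth Φ hΦ)).u_mem x‖ ^ 2 ≤ _
  have hy' : FT (U.sub (U.smooth Φ hΦ)).u_mem x = FT U.u_mem x - FT (Sop_FT Φ hΦ U.u_mem).1 x := hy
  rw [hy', hz]
  rw [hx, ← one_sub_mul, norm_mul]
  rcases le_or_gt ‖x‖ R with h | h
  · rw [h2 x h]; simp; positivity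
  · rw [le_div_iff₀ (by positivity)]
    have hp : (1:ℝ) ≤ 4 * Real.pi ^ 2 := by nlinarith [Real.pi_gt_three]
    have e : ‖1 - Φ x‖ * ‖FT U.u_mem x‖ * R ^ 2 ≤ 4 * Real.pi ^ 2 * ‖x‖ ^ 2 * ‖FT U.u_mem x‖ := by
      calc _ ≤ 1 * ‖FT U.u_mem x‖ * ‖x‖ ^ 2 := by gcongr; exact h1 x
        _ ≤ (4 * Real.pi ^ 2) * ‖FT U.u_mem x‖ * ‖x‖ ^ 2 := by gcongr
        _ = _ := by ring
    calc _ = (‖1 - Φ x‖ * ‖FT U.u_mem x‖ * R ^ 2) ^ 2 := by ring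
      _ ≤ _ := by gcongr

/-- bound for the smoothing -/
theorem smooth_bdd : ∃ C, 0 ≤ C ∧ ∀ U : H2 N, ∀ x, ‖(U.smooth Φ hΦ).u x‖ ≤ C * √U.massSq := by
  let K : 𝓢(Esp N, ℂ) := 𝓕 Φ
  refine ⟨√(∫ y, ‖K y‖ ^ 2), by positivity, fun U x => ?_⟩
  have hK : L2m K := K.memLp 2 volume
  have hKx : L2m (fun y => K (y - x)) :=
    hK.comp_measurePreserving (measurePreserving_sub_right volume x)
  have h := cauchy_schwarz hKx U.u_mem
  have e : ∫ y, ‖K (y - x)‖ ^ 2 = ∫ y, ‖K y‖ ^ 2 :=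
    integral_sub_right_eq_self (fun y => ‖K y‖ ^ 2) x
  rw [e] at h
  calc _ = ‖∫ y, K (y - x) * U.u y‖ := rfl
    _ ≤ ∫ y, ‖K (y - x) * U.u y‖ := norm_integral_le_integral_norm _
    _ = ∫ y, ‖K (y - x)‖ * ‖U.u y‖ := by simp only [norm_mul]
    _ ≤ √((∫ y, ‖K y‖ ^ 2) * ∫ y, ‖U.u y‖ ^ 2) := Real.le_sqrt_of_sq_le h
    _ = √(∫ y, ‖K y‖ ^ 2) * √U.massSq := Real.sqrt_mul (integral_nonneg fun x => by positivity) _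

end H2

end


open MeasureTheory Filter Topology

noncomputable section

open scoped SchwartzMap FourierTransform LineDeriv

theorem L2m.eLpNorm_eq {N : ℕ} {f : Esp N → ℂ} (hf : L2m f) :
    eLpNorm f 2 volume = ENNReal.ofReal (√(∫ x, ‖f x‖ ^ 2)) := by
  rw [MemLp.eLpNorm_eq_integral_rpow_norm (by norm_num) (by norm_num) hf, Real.sqrt_eq_rpow]
  simp

theorem rLp_two {N : ℕ} {f : Esp N → ℂ} (hf : L2m f) : rLp 2 f = √(∫ x, ‖f x‖ ^ 2) := by
  unfold rLp
  rw [show ENNReal.ofReal 2 = 2 by simp, hf.eLpNorm_eq, ENNReal.toReal_ofReal (by positivity)]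

theorem sqrt_rpow {x : ℝ} (hx : 0 ≤ x) (y : ℝ) : √x ^ y = x ^ (y / 2) := by
  rw [Real.sqrt_eq_rpow, ← Real.rpow_mul hx]; congr 1; ring

/-- the right-hand side of Gagliardo-Nirenberg -/
def gnR (N : ℕ) (σ L M : ℝ) : ℝ :=
  GNconst N σ * L ^ ((N : ℝ) * σ / 4) * M ^ (1 + σ - (N : ℝ) * σ / 4)

theorem gnR_nonneg {N : ℕ} {σ L M : ℝ} (hB : 0 < GNconst N σ) (hL : 0 ≤ L) (hM : 0 ≤ M) : 0 ≤ gnR N σ L M := by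
  unfold gnR; positivity

theorem gnR_mono {N : ℕ} {σ L M L' M' : ℝ} (hB : 0 < GNconst N σ) (hσ : 0 ≤ σ)
    (hq : 0 ≤ 1 + σ - (N : ℝ) * σ / 4) (hL : 0 ≤ L) (hM : 0 ≤ M) (h1 : L ≤ L') (h2 : M ≤ M') :
    gnR N σ L M ≤ gnR N σ L' M' := by
  unfold gnR
  have : 0 ≤ L' := hL.trans h1
  gcongr

namespace H2
variable {N : ℕ} {σ : ℝ}

theorem pPow_triv (hσ : 0 < σ) (U : H2 N) (hU : ¬ U.Nontriv) : U.pPow σ = 0 := by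
  have hU' : U.u =ᵐ[volume] 0 := not_not.1 hU
  refine integral_eq_zero_of_ae ?_
  filter_upwards [hU'] with x hx
  rw [hx]; simp [Real.zero_rpow (by positivity : 2 * σ + 2 ≠ 0)]

theorem GN_raw (hN : 1 ≤ N) (hσ : 0 < σ) (hB : 0 < GNconst N σ) (U : H2 N) :
    U.pPow σ ≤ gnR N σ U.lapSq U.massSq := by
  by_cases hU : U.Nontriv
  · have hbdd : BddAbove {r : ℝ | ∃ U : H2 N, U.Nontriv ∧
      r = U.pPow σ /
      (rLp 2 U.lapl ^ ((N : ℝ) * σ / 2) * rLp 2 U.u ^ (2 + 2 * σ - (N : ℝ) * σ / 2))} := by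
      by_contra h
      have : GNconst N σ = 0 := Real.sSup_of_not_bddAbove h
      linarith
    have h := le_csSup hbdd ⟨U, hU, rfl⟩
    change _ ≤ GNconst N σ at h
    rw [rLp_two U.lapl_mem, rLp_two U.u_mem] at h
    change _ / (√U.lapSq ^ _ * √U.massSq ^ _) ≤ _ at h
    have hL := U.lap_pos hN hU
    have hM := U.massSq_pos_iff.2 hU
    rw [sqrt_rpow hL.le, sqrt_rpow hM.le, div_le_iff₀ (by positivity)] at h
    unfold gnR
    rw [mul_assoc]
    refine h.trans_eq ?_
    congr 3 <;> ring
  · rw [pPow_triv hσ U hU]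
    exact gnR_nonneg hB U.lapSq_nonneg U.massSq_nonneg

theorem integrable_rpow_of_bdd (hσ : 0 < σ) {f : Esp N → ℂ} (hf : L2m f) {C : ℝ} (hC : ∀ x, ‖f x‖ ≤ C) :
    Integrable (fun x => ‖f x‖ ^ (2 * σ + 2)) volume ∧
    ∫ x, ‖f x‖ ^ (2 * σ + 2) ≤ C ^ (2 * σ) * ∫ x, ‖f x‖ ^ 2 := by
  have hb : ∀ x, ‖f x‖ ^ (2 * σ + 2) ≤ C ^ (2 * σ) * ‖f x‖ ^ 2 := by
    intro x
    rw [Real.rpow_add_of_nonneg (norm_nonneg _) (by positivity) (by norm_num), Real.rpow_two]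
    gcongr
    exact hC x
  have hi : Integrable (fun x => ‖f x‖ ^ (2 * σ + 2)) volume := by
    refine (hf.int_sq.const_mul (C ^ (2 * σ))).mono' ?_ ?_
    · exact (hf.1.norm.aemeasurable.pow_const _).aestronglyMeasurable
    · refine Eventually.of_forall fun x => ?_
      rw [Real.norm_of_nonneg (by positivity)]
      exact hb x
  refine ⟨hi, ?_⟩
  rw [← integral_const_mul]
  exact integral_mono hi (hf.int_sq.const_mul _) hb

theorem pPow_integrable (hN : 1 ≤ N) (hσ : 0 < σ) (hq : 0 ≤ 1 + σ - (N : ℝ) * σ / 4)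
    (hB : 0 < GNconst N σ) (U : H2 N) :
    Integrable (fun x => ‖U.u x‖ ^ (2 * σ + 2)) volume := by
  choose Φ h1 h2 h3 h4 using fun n : ℕ => exists_cutoff N ((n : ℝ) + 1) (by positivity)
  let V : ℕ → H2 N := fun n => U.smooth (Φ n) (h1 n)
  have hmass : ∀ n, (U.sub (V n)).massSq ≤ U.lapSq / ((n : ℝ) + 1) ^ 4 := fun n =>
    sub_smooth_mass_le (Φ n) (h1 n) U (by positivity) (h3 n) (h4 n)
  have hm0 : Tendsto (fun n => (U.sub (V n)).massSq) atTop (𝓝 0) := by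
    refine squeeze_zero (fun n => massSq_nonneg _) hmass ?_
    refine tendsto_const_nhds.div_atTop ?_
    refine (tendsto_pow_atTop (by norm_num)).comp ?_
    exact tendsto_atTop_add_const_right _ _ tendsto_natCast_atTop_atTop
  have hinm : TendstoInMeasure volume (fun n => (V n).u) atTop U.u := by
    refine tendstoInMeasure_of_tendsto_eLpNorm (p := 2) (by norm_num) (fun n => (V n).u_mem.1) U.u_mem.1 ?_
    have : ∀ n, eLpNorm ((V n).u - U.u) 2 volume = ENNReal.ofReal (√(U.sub (V n)).massSq) := by
      intro n
      rw [eLpNorm_sub_comm]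
      exact L2m.eLpNorm_eq (U.sub (V n)).u_mem
    simp only [this]
    have h := ENNReal.tendsto_ofReal (hm0.sqrt)
    simpa using h
  obtain ⟨ns, _, hae⟩ := hinm.exists_seq_tendsto_ae
  set C0 := gnR N σ U.lapSq U.massSq
  have hV : ∀ n, ∫⁻ x, ENNReal.ofReal (‖(V n).u x‖ ^ (2 * σ + 2)) ≤ ENNReal.ofReal C0 := by
    intro n
    obtain ⟨C, hC0, hC⟩ := smooth_bdd (Φ n) (h1 n)
    have hi := (integrable_rpow_of_bdd hσ (V n).u_mem (hC U)).1
    rw [← ofReal_integral_eq_lintegral_ofReal hi (Eventually.of_forall fun x => by positivity)]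
    refine ENNReal.ofReal_le_ofReal ?_
    refine (GN_raw hN hσ hB (V n)).trans ?_
    exact gnR_mono hB hσ.le hq (lapSq_nonneg _) (massSq_nonneg _) (smooth_lap_le _ _ _ (h2 n)) (smooth_mass_le _ _ _ (h2 n))
  have hF : ∫⁻ x, ENNReal.ofReal (‖U.u x‖ ^ (2 * σ + 2)) ≤ ENNReal.ofReal C0 := by
    calc _ = ∫⁻ x, liminf (fun k => ENNReal.ofReal (‖(V (ns k)).u x‖ ^ (2 * σ + 2))) atTop := by
          refine lintegral_congr_ae ?_
          filter_upwards [hae] with x hx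
          refine (Tendsto.liminf_eq ?_).symm
          refine ENNReal.tendsto_ofReal ?_
          exact hx.norm.rpow_const (Or.inr (by positivity))
      _ ≤ liminf (fun k => ∫⁻ x, ENNReal.ofReal (‖(V (ns k)).u x‖ ^ (2 * σ + 2))) atTop := by
          refine lintegral_liminf_le' fun k => ?_
          exact ((V (ns k)).u_mem.1.norm.aemeasurable.pow_const _).ennreal_ofReal
      _ ≤ _ := by
          refine liminf_le_of_le (by isBoundedDefault) ?_
          intro b hb
          obtain ⟨k, hk⟩ := hb.exists
          exact hk.trans (hV _)
  refine ⟨(U.u_mem.1.norm.aemeasurable.pow_const _).aestronglyMeasurable, ?_⟩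
  rw [hasFiniteIntegral_iff_ofReal (Eventually.of_forall fun x => by positivity)]
  exact hF.trans_lt ENNReal.ofReal_lt_top

theorem pPow_pos (hN : 1 ≤ N) (hσ : 0 < σ) (hq : 0 ≤ 1 + σ - (N : ℝ) * σ / 4)
    (hB : 0 < GNconst N σ) (U : H2 N) (hU : U.Nontriv) : 0 < U.pPow σ := by
  refine lt_of_le_of_ne (U.pPow_nonneg σ) fun h0 => hU ?_
  have h1 := (integral_eq_zero_iff_of_nonneg (fun x => by positivity) (pPow_integrable hN hσ hq hB U)).1 h0.symm
  filter_upwards [h1] with x hx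
  simp only [Pi.zero_apply] at hx ⊢
  rw [Real.rpow_eq_zero (norm_nonneg _) (by positivity)] at hx
  simpa using hx

end H2

end


open MeasureTheory Filter Topology

noncomputable section

open scoped SchwartzMap FourierTransform LineDeriv

theorem rpow_add_theta {p θ a b : ℝ} (hp : 1 ≤ p) (h0 : 0 < θ) (h1 : θ < 1) (ha : 0 ≤ a) (hb : 0 ≤ b) :
    (a + b) ^ p ≤ θ ^ (1 - p) * a ^ p + (1 - θ) ^ (1 - p) * b ^ p := by
  have h2 : 0 < 1 - θ := by linarith
  have h := (convexOn_rpow hp).2 (x := a / θ) (by simp; positivity) (y := b / (1 - θ))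
    (by simp; positivity) h0.le h2.le (by ring)
  simp only [smul_eq_mul] at h
  rw [mul_div_cancel₀ _ h0.ne', mul_div_cancel₀ _ h2.ne', Real.div_rpow ha h0.le, Real.div_rpow hb h2.le] at h
  refine h.trans_eq ?_
  rw [Real.rpow_sub h0, Real.rpow_sub h2, Real.rpow_one, Real.rpow_one]
  ring

theorem rpow_add_eps {p : ℝ} (hp : 1 ≤ p) {ε : ℝ} (hε : 0 < ε) : ∃ C, 0 ≤ C ∧ ∀ a b : ℝ, 0 ≤ a → 0 ≤ b →
    (a + b) ^ p ≤ C * a ^ p + (1 + ε) * b ^ p := by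
  have hc : Tendsto (fun θ : ℝ => (1 - θ) ^ (1 - p)) (𝓝[>] 0) (𝓝 1) := by
    have : ContinuousAt (fun θ : ℝ => (1 - θ) ^ (1 - p)) 0 :=
      ContinuousAt.rpow_const (by fun_prop) (Or.inl (by norm_num))
    have h := this.tendsto
    simp only [sub_zero, Real.one_rpow] at h
    exact h.mono_left nhdsWithin_le_nhds
  have h1 := hc.eventually (eventually_lt_nhds (show (1:ℝ) < 1 + ε by linarith))
  have h2 : ∀ᶠ θ : ℝ in 𝓝[>] 0, θ ∈ Set.Ioo (0:ℝ) 1 := Ioo_mem_nhdsGT one_pos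
  obtain ⟨θ, h3, h4, h5⟩ := (h1.and h2).exists
  refine ⟨θ ^ (1 - p), by positivity, fun a b ha hb => (rpow_add_theta hp h4 h5 ha hb).trans ?_⟩
  gcongr

/-- weak convergence in `L²`. -/
def WeakTo {N : ℕ} (f : ℕ → Esp N → ℂ) (g : Esp N → ℂ) : Prop :=
  ∀ h, L2m h → Tendsto (fun n => ∫ x, h x * f n x) atTop (𝓝 (∫ x, h x * g x))

theorem WeakTo.comp {N : ℕ} {f : ℕ → Esp N → ℂ} {g : Esp N → ℂ} (hw : WeakTo f g) {ψ : ℕ → ℕ} (hψ : StrictMono ψ) :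
    WeakTo (fun n => f (ψ n)) g := fun h hh => (hw h hh).comp hψ.tendsto_atTop

theorem weak_ext {N : ℕ} (f : ℕ → Esp N → ℂ) (hf : ∀ n, L2m (f n)) (C : ℝ) (hC : ∀ n, ∫ x, ‖f n x‖ ^ 2 ≤ C) :
    ∃ ψ : ℕ → ℕ, StrictMono ψ ∧ ∃ g, L2m g ∧ WeakTo (fun n => f (ψ n)) g := by
  have : Fact ((2:ENNReal) ≠ ⊤) := ⟨by norm_num⟩
  let F : ℕ → Lp (α := Esp N) ℂ 2 volume := fun n => MemLp.toLp (f n) (hf n)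
  let T : ℕ → WeakDual ℂ (Lp (α := Esp N) ℂ 2 volume) := fun n =>
    StrongDual.toWeakDual (InnerProductSpace.toDual ℂ _ (F n))
  have hb : ∀ n, ‖F n‖ ≤ √C := by
    intro n
    rw [Lp.norm_toLp, (hf n).eLpNorm_eq, ENNReal.toReal_ofReal (by positivity)]
    exact Real.sqrt_le_sqrt (hC n)
  have hsc := WeakDual.isSeqCompact_closedBall ℂ (Lp (α := Esp N) ℂ 2 volume) 0 (√C)
  obtain ⟨ℓ, -, ψ, hψ, hlim⟩ := hsc (x := T) (fun n => by simpa [T] using hb n)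
  refine ⟨ψ, hψ, ?_⟩
  set G := (InnerProductSpace.toDual ℂ (Lp (α := Esp N) ℂ 2 volume)).symm (WeakDual.toStrongDual ℓ) with hG
  refine ⟨G, Lp.memLp G, fun h hh => ?_⟩
  have hh' : L2m (fun x => (starRingEnd ℂ) (h x)) := hh.star
  let H : Lp (α := Esp N) ℂ 2 volume := MemLp.toLp _ hh'
  have h1 := (tendsto_iff_forall_eval_tendsto_topDualPairing.1 hlim) H
  have e1 : ∀ n, inner ℂ (F n) H = starRingEnd ℂ (∫ x, h x * f n x) := by
    intro n
    rw [L2.inner_def, ← integral_conj]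
    refine integral_congr_ae ?_
    filter_upwards [MemLp.coeFn_toLp (hf n), MemLp.coeFn_toLp hh'] with x hx hy
    simp only [F, H]
    rw [hx, hy]
    simp [mul_comm]
  have e2 : inner ℂ G H = starRingEnd ℂ (∫ x, h x * G x) := by
    rw [L2.inner_def, ← integral_conj]
    refine integral_congr_ae ?_
    filter_upwards [MemLp.coeFn_toLp hh'] with x hy
    simp only [H]
    rw [hy]
    simp [mul_comm]
  have e3 : ℓ H = inner ℂ G H := by
    rw [hG, InnerProductSpace.toDual_symm_apply]; rfl
  have h2 : Tendsto (fun n => starRingEnd ℂ (∫ x, h x * f (ψ n) x)) atTop (𝓝 (starRingEnd ℂ (∫ x, h x * G x))) := by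
    rw [← e2, ← e3]
    simp only [← e1]
    exact h1
  have h3 := (Complex.continuous_conj.tendsto _).comp h2
  simpa [Function.comp_def] using h3

theorem weak_ext_finset {N : ℕ} {ι : Type*} (s : Finset ι) (f : ι → ℕ → Esp N → ℂ) (hf : ∀ i n, L2m (f i n)) (C : ℝ)
    (hC : ∀ i n, ∫ x, ‖f i n x‖ ^ 2 ≤ C) :
    ∃ ψ : ℕ → ℕ, StrictMono ψ ∧ ∀ i ∈ s, ∃ g, L2m g ∧ WeakTo (fun n => f i (ψ n)) g := by
  classical
  induction s using Finset.induction_on with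
  | empty => exact ⟨id, strictMono_id, by simp⟩
  | insert a s _ ih =>
    obtain ⟨ψ, hψ, h⟩ := ih
    obtain ⟨χ, hχ, g, hg, hw⟩ := weak_ext (fun n => f a (ψ n)) (fun n => hf _ _) C (fun n => hC _ _)
    refine ⟨ψ ∘ χ, hψ.comp hχ, ?_⟩
    intro i hi
    rcases Finset.mem_insert.1 hi with rfl | hi
    · exact ⟨g, hg, hw⟩
    · obtain ⟨g', hg', hw'⟩ := h i hi
      exact ⟨g', hg', hw'.comp hχ⟩

theorem weak_split {N : ℕ} {f : ℕ → Esp N → ℂ} {g : Esp N → ℂ} (hf : ∀ n, L2m (f n)) (hg : L2m g) (hw : WeakTo f g) :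
    Tendsto (fun n => (∫ x, ‖f n x - g x‖ ^ 2) + (∫ x, ‖g x‖ ^ 2) - ∫ x, ‖f n x‖ ^ 2) atTop (𝓝 0) := by
  have hg' : L2m (fun x => (starRingEnd ℂ) (g x)) := hg.star
  have h1 := hw _ hg'
  have h2 : Tendsto (fun n => 2 * ((∫ x, starRingEnd ℂ (g x) * g x).re - (∫ x, starRingEnd ℂ (g x) * f n x).re))
      atTop (𝓝 0) := by
    have := ((Complex.continuous_re.tendsto _).comp h1).const_sub ((∫ x, starRingEnd ℂ (g x) * g x).re) |>.const_mul 2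
    simpa [Function.comp_def] using this
  refine h2.congr fun n => ?_
  have i1 := integrable_mul_L2 hg' hg
  have i2 := integrable_mul_L2 hg' (hf n)
  have i3 : Integrable (fun x => ‖f n x - g x‖ ^ 2) volume := L2m.int_sq ((hf n).sub hg)
  have r1 : (∫ x, starRingEnd ℂ (g x) * g x).re = ∫ x, (starRingEnd ℂ (g x) * g x).re :=
    (integral_re i1).symm
  have r2 : (∫ x, starRingEnd ℂ (g x) * f n x).re = ∫ x, (starRingEnd ℂ (g x) * f n x).re :=
    (integral_re i2).symm
  have j1 : Integrable (fun x => (starRingEnd ℂ (g x) * g x).re) volume := i1.re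
  have j2 : Integrable (fun x => (starRingEnd ℂ (g x) * f n x).re) volume := i2.re
  have i4 : Integrable (fun x => ‖f n x - g x‖ ^ 2 + ‖g x‖ ^ 2) volume := i3.add hg.int_sq
  rw [r1, r2, ← integral_sub j1 j2, ← integral_const_mul, ← integral_add i3 hg.int_sq,
    ← integral_sub i4 (hf n).int_sq]
  congr 1
  ext x
  simp only [← Complex.normSq_eq_norm_sq, Complex.normSq_apply, Complex.mul_re, Complex.conj_re, Complex.conj_im,
    Complex.sub_re, Complex.sub_im]
  ring

namespace H2
variable {N : ℕ} {σ : ℝ}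

theorem pPow_sub_le (hN : 1 ≤ N) (hσ : 0 < σ) (hq : 0 ≤ 1 + σ - (N : ℝ) * σ / 4)
    (hB : 0 < GNconst N σ) (U V : H2 N) :
    U.pPow σ ≤ (1/2 : ℝ) ^ (1 - (2 * σ + 2)) * (V.pPow σ + (U.sub V).pPow σ) := by
  have i1 := pPow_integrable hN hσ hq hB U
  have i2 := pPow_integrable hN hσ hq hB V
  have i3 := pPow_integrable hN hσ hq hB (U.sub V)
  unfold pPow
  rw [← integral_add i2 i3, ← integral_const_mul]
  refine integral_mono i1 ((i2.add i3).const_mul _) fun x => ?_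
  have h := rpow_add_theta (p := 2 * σ + 2) (θ := 1/2) (by linarith) (by norm_num) (by norm_num)
    (norm_nonneg (V.u x)) (norm_nonneg ((U.sub V).u x))
  have h2 : ‖U.u x‖ ≤ ‖V.u x‖ + ‖(U.sub V).u x‖ := by
    have : U.u x = V.u x + (U.sub V).u x := by simp [H2.sub]
    rw [this]; exact norm_add_le _ _
  calc ‖U.u x‖ ^ (2 * σ + 2) ≤ (‖V.u x‖ + ‖(U.sub V).u x‖) ^ (2 * σ + 2) := by gcongr
    _ ≤ _ := h
    _ = _ := by norm_num; ring

theorem nonvanish (hN : 1 ≤ N) (hσ : 0 < σ) (hq : 0 < 1 + σ - (N : ℝ) * σ / 4)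
    (hB : 0 < GNconst N σ) {C c : ℝ} (hc : 0 < c) (hC : 0 < C) :
    ∃ Φ : 𝓢(Esp N, ℂ), ∃ hΦ : HasCompactSupport Φ, ∃ δ > 0, ∀ U : H2 N, U.massSq ≤ C → U.lapSq ≤ C → c ≤ U.pPow σ →
      ∃ x, δ ≤ ‖(U.smooth Φ hΦ).u x‖ := by
  set A : ℝ := (1/2 : ℝ) ^ (1 - (2 * σ + 2)) with hA
  have hApos : 0 < A := by positivity
  have ht : Tendsto (fun R : ℝ => gnR N σ C (C / R ^ 4)) atTop (𝓝 0) := by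
    have h1 : Tendsto (fun R : ℝ => C / R ^ 4) atTop (𝓝 0) :=
      tendsto_const_nhds.div_atTop (tendsto_pow_atTop (by norm_num))
    have h2 := (h1.rpow_const (p := 1 + σ - (N : ℝ) * σ / 4) (Or.inr hq.le)).const_mul (GNconst N σ * C ^ ((N : ℝ) * σ / 4))
    rw [Real.zero_rpow hq.ne', mul_zero] at h2
    exact h2
  obtain ⟨R, hR1, hR2⟩ := ((ht.eventually (eventually_lt_nhds (show (0:ℝ) < c / (2 * A) by positivity))).and
    (eventually_gt_atTop 0)).exists
  obtain ⟨Φ, h1, h2, h3, h4⟩ := exists_cutoff N R hR2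
  have ht2 : Tendsto (fun δ : ℝ => δ ^ (2 * σ) * C) (𝓝[>] 0) (𝓝 0) := by
    have h := ((continuous_id.rpow_const (fun _ => Or.inr (by positivity : 0 ≤ 2 * σ))).mul_const C).tendsto (0:ℝ)
    simp only [id, Real.zero_rpow (by positivity : 2 * σ ≠ 0), zero_mul] at h
    exact h.mono_left nhdsWithin_le_nhds
  obtain ⟨δ, hδ1, hδ2⟩ := ((ht2.eventually (eventually_lt_nhds (show (0:ℝ) < c / (2 * A) by positivity))).and
    self_mem_nhdsWithin).exists
  have hδ2 : 0 < δ := hδ2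
  refine ⟨Φ, h1, δ, hδ2, fun U hM hL hP => ?_⟩
  by_contra hcon
  push Not at hcon
  have a1 := pPow_sub_le hN hσ hq.le hB U (U.smooth Φ h1)
  have a2 : (U.sub (U.smooth Φ h1)).pPow σ ≤ gnR N σ C (C / R ^ 4) := by
    refine (GN_raw hN hσ hB _).trans (gnR_mono hB hσ.le hq.le (lapSq_nonneg _) (massSq_nonneg _) ?_ ?_)
    · exact (sub_smooth_lap_le Φ h1 U h3).trans hL
    · refine (sub_smooth_mass_le Φ h1 U hR2 h3 h4).trans ?_
      gcongr
  have a3 : (U.smooth Φ h1).pPow σ ≤ δ ^ (2 * σ) * C := by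
    refine (integrable_rpow_of_bdd hσ (U.smooth Φ h1).u_mem (fun x => (hcon x).le)).2.trans ?_
    gcongr
    exact (smooth_mass_le Φ h1 U h2).trans hM
  have : A * ((U.smooth Φ h1).pPow σ + (U.sub (U.smooth Φ h1)).pPow σ) < A * (c / (2 * A) + c / (2 * A)) := by
    gcongr
    · exact a3.trans_lt hδ1
    · exact a2.trans_lt hR1
  have e : A * (c / (2 * A) + c / (2 * A)) = c := by field_simp; norm_num
  linarith

theorem smooth_trans (Φ : 𝓢(Esp N, ℂ)) (hΦ : HasCompactSupport Φ) (U : H2 N) (x0 : Esp N) :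
    ((U.aff 1 1 one_pos x0).smooth Φ hΦ).u 0 = (U.smooth Φ hΦ).u x0 := by
  change ∫ y, (𝓕 Φ : 𝓢(Esp N, ℂ)) (y - 0) * (((1:ℝ):ℂ) * U.u ((1:ℝ) • y + x0)) = ∫ y, (𝓕 Φ : 𝓢(Esp N, ℂ)) (y - x0) * U.u y
  rw [← integral_add_right_eq_self (fun y => (𝓕 Φ : 𝓢(Esp N, ℂ)) (y - x0) * U.u y) x0]
  congr 1; ext y; simp

end H2

end


open MeasureTheory Filter Topology

noncomputable section

open scoped SchwartzMap FourierTransform LineDeriv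

namespace H2
variable {N : ℕ} {σ : ℝ}

theorem smooth_weak (Φ : 𝓢(Esp N, ℂ)) (hΦ : HasCompactSupport Φ) {v : ℕ → H2 N} {g : Esp N → ℂ}
    (hw : WeakTo (fun n => (v n).u) g) (x : Esp N) :
    Tendsto (fun n => ((v n).smooth Φ hΦ).u x) atTop (𝓝 (Sop Φ g x)) := by
  let K : 𝓢(Esp N, ℂ) := 𝓕 Φ
  have hK : L2m K := K.memLp 2 volume
  have hKx : L2m (fun y => K (y - x)) :=
    hK.comp_measurePreserving (measurePreserving_sub_right volume x)
  exact hw _ hKx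

theorem weight_tendsto {v : ℕ → H2 N} {C : ℝ} (hM : ∀ n, (v n).massSq ≤ C) (hL : ∀ n, (v n).lapSq ≤ C)
    (hw : WeakTo (fun n => (v n).u) (fun _ => 0)) {k : Esp N → ℝ} (hk : Integrable k) (hk0 : ∀ x, 0 ≤ k x)
    (hk1 : ∀ x, k x ≤ 1) : Tendsto (fun n => ∫ x, k x * ‖(v n).u x‖ ^ 2) atTop (𝓝 0) := by
  have hIntg : ∀ f : Esp N → ℂ, L2m f → Integrable (fun x => k x * ‖f x‖ ^ 2) := by
    intro f hf
    refine Integrable.mono' hf.int_sq (hk.1.mul hf.int_sq.1) (Eventually.of_forall fun x => ?_)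
    rw [Real.norm_of_nonneg (mul_nonneg (hk0 x) (by positivity))]
    exact mul_le_of_le_one_left (by positivity) (hk1 x)
  rw [Metric.tendsto_atTop]
  intro ε hε
  have h1 : Tendsto (fun R : ℝ => 2 * (C / R ^ 4)) atTop (𝓝 0) := by
    have := (tendsto_const_nhds (x := C)).div_atTop (tendsto_pow_atTop (α := ℝ) (n := 4) (by norm_num))
    simpa using this.const_mul 2
  obtain ⟨R, hR1, hR2⟩ := ((h1.eventually (eventually_lt_nhds (half_pos hε))).and (eventually_gt_atTop 0)).exists
  obtain ⟨Φ, hΦ, h2, h3, h4⟩ := exists_cutoff N R hR2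
  obtain ⟨C', hC', hb⟩ := smooth_bdd Φ hΦ
  have h5 : Tendsto (fun n => ∫ x, 2 * (k x * ‖((v n).smooth Φ hΦ).u x‖ ^ 2)) atTop (𝓝 (∫ x : Esp N, (0:ℝ))) := by
    refine tendsto_integral_of_dominated_convergence (fun x => 2 * (k x * (C' * √C) ^ 2)) ?_ ?_ ?_ ?_
    · intro n; exact ((hIntg _ ((v n).smooth Φ hΦ).u_mem).const_mul 2).1
    · exact (hk.mul_const _).const_mul 2
    · intro n
      refine Eventually.of_forall fun x => ?_
      have := hk0 x
      rw [Real.norm_of_nonneg (by positivity)]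
      gcongr
      refine (hb (v n) x).trans ?_
      gcongr
      exact hM n
    · refine Eventually.of_forall fun x => ?_
      have := smooth_weak Φ hΦ hw x
      have h0 : Sop Φ (fun _ : Esp N => (0:ℂ)) x = 0 := by simp [Sop]
      rw [h0] at this
      have := ((this.norm.pow 2).const_mul (k x)).const_mul 2
      simpa using this
  rw [integral_zero] at h5
  obtain ⟨n0, hn0⟩ := eventually_atTop.1 (h5.eventually (eventually_lt_nhds (half_pos hε)))
  refine ⟨n0, fun n hn => ?_⟩
  have h6 := hn0 n hn
  rw [Real.dist_eq, sub_zero, abs_of_nonneg (integral_nonneg fun x => mul_nonneg (hk0 x) (by positivity))]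
  have h7 : ∫ x, k x * ‖(v n).u x‖ ^ 2 ≤ ∫ x, (2 * (k x * ‖((v n).smooth Φ hΦ).u x‖ ^ 2) +
      2 * ‖((v n).sub ((v n).smooth Φ hΦ)).u x‖ ^ 2) := by
    refine integral_mono (hIntg _ (v n).u_mem) (((hIntg _ ((v n).smooth Φ hΦ).u_mem).const_mul 2).add
      ((L2m.int_sq ((v n).sub ((v n).smooth Φ hΦ)).u_mem).const_mul 2)) fun x => ?_
    set b := ((v n).smooth Φ hΦ).u x
    have e : ((v n).sub ((v n).smooth Φ hΦ)).u x = (v n).u x - b := rfl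
    simp only [e]
    have t : ‖(v n).u x‖ ≤ ‖b‖ + ‖(v n).u x - b‖ := by
      have := norm_add_le b ((v n).u x - b); simpa using this
    have t2 : ‖(v n).u x‖ ^ 2 ≤ 2 * ‖b‖ ^ 2 + 2 * ‖(v n).u x - b‖ ^ 2 := by
      have := pow_le_pow_left₀ (norm_nonneg _) t 2
      nlinarith [sq_nonneg (‖b‖ - ‖(v n).u x - b‖)]
    have := hk0 x
    have := hk1 x
    have q : k x * (2 * ‖(v n).u x - b‖ ^ 2) ≤ 2 * ‖(v n).u x - b‖ ^ 2 := mul_le_of_le_one_left (by positivity) (hk1 x)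
    nlinarith [mul_le_mul_of_nonneg_left t2 (hk0 x)]
  rw [integral_add ((hIntg _ ((v n).smooth Φ hΦ).u_mem).const_mul 2)
      ((L2m.int_sq ((v n).sub ((v n).smooth Φ hΦ)).u_mem).const_mul 2)] at h7
  have h8 : ∫ x, 2 * ‖((v n).sub ((v n).smooth Φ hΦ)).u x‖ ^ 2 ≤ 2 * (C / R ^ 4) := by
    rw [integral_const_mul]
    have := sub_smooth_mass_le Φ hΦ (v n) hR2 h3 h4
    have h9 : (v n).lapSq / R ^ 4 ≤ C / R ^ 4 := by gcongr; exact hL n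
    unfold massSq at this
    linarith
  linarith

theorem ae_conv {v : ℕ → H2 N} {C : ℝ} (hM : ∀ n, (v n).massSq ≤ C) (hL : ∀ n, (v n).lapSq ≤ C)
    (hw : WeakTo (fun n => (v n).u) (fun _ => 0)) :
    ∃ ψ : ℕ → ℕ, StrictMono ψ ∧ ∀ᵐ x, Tendsto (fun n => (v (ψ n)).u x) atTop (𝓝 0) := by
  let k : Esp N → ℝ := fun x => (1 + ‖x‖) ^ (-((N : ℝ) + 1))
  have hk : Integrable k := integrable_one_add_norm (by simp)
  have hk0 : ∀ x, 0 < k x := fun x => by positivity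
  have hk1 : ∀ x, k x ≤ 1 := fun x =>
    Real.rpow_le_one_of_one_le_of_nonpos (by linarith [norm_nonneg x]) (by linarith [(Nat.cast_nonneg N : (0:ℝ) ≤ N)])
  have h := weight_tendsto hM hL hw hk (fun x => (hk0 x).le) hk1
  have hIntg : ∀ n, Integrable (fun x => k x * ‖(v n).u x‖ ^ 2) := by
    intro n
    have hf := L2m.int_sq (v n).u_mem
    refine Integrable.mono' hf (hk.1.mul hf.1) (Eventually.of_forall fun x => ?_)
    rw [Real.norm_of_nonneg (mul_nonneg (hk0 x).le (by positivity))]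
    exact mul_le_of_le_one_left (by positivity) (hk1 x)
  have h2 : TendstoInMeasure volume (fun n x => k x * ‖(v n).u x‖ ^ 2) atTop (fun _ => (0:ℝ)) := by
    refine tendstoInMeasure_of_tendsto_eLpNorm (p := 1) one_ne_zero (fun n => (hIntg n).1)
      aestronglyMeasurable_const ?_
    have e : ∀ n, eLpNorm ((fun x => k x * ‖(v n).u x‖ ^ 2) - fun _ => (0:ℝ)) 1 volume =
        ENNReal.ofReal (∫ x, k x * ‖(v n).u x‖ ^ 2) := by
      intro n
      have : ((fun x => k x * ‖(v n).u x‖ ^ 2) - fun _ => (0:ℝ)) = (fun x => k x * ‖(v n).u x‖ ^ 2) := by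
        ext; simp
      rw [this, eLpNorm_one_eq_lintegral_enorm, ← ofReal_integral_norm_eq_lintegral_enorm (hIntg n)]
      congr 2
      ext x
      rw [Real.norm_of_nonneg (mul_nonneg (hk0 x).le (by positivity))]
    simp only [e]
    have := ENNReal.tendsto_ofReal h
    simpa using this
  obtain ⟨ψ, hψ, h3⟩ := h2.exists_seq_tendsto_ae
  refine ⟨ψ, hψ, ?_⟩
  filter_upwards [h3] with x hx
  have h4 := (hx.const_mul (k x)⁻¹).sqrt
  rw [tendsto_zero_iff_norm_tendsto_zero]
  simp only [inv_mul_cancel_left₀ (hk0 x).ne', mul_zero, Real.sqrt_zero] at h4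
  simpa using h4

theorem BL (hN : 1 ≤ N) (hσ : 0 < σ) (hq : 0 ≤ 1 + σ - (N : ℝ) * σ / 4) (hB : 0 < GNconst N σ)
    {w v : ℕ → H2 N} {U : H2 N} (hwv : ∀ n x, (w n).u x = U.u x + (v n).u x) {K : ℝ}
    (hK : ∀ n, (v n).pPow σ ≤ K) (hae : ∀ᵐ x, Tendsto (fun n => (v n).u x) atTop (𝓝 0)) {ε : ℝ} (hε : 0 < ε) :
    ∀ᶠ n in atTop, (w n).pPow σ ≤ U.pPow σ + (v n).pPow σ + ε := by
  have hp : 0 < 2 * σ + 2 := by linarith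
  have hK0 : 0 ≤ K := (pPow_nonneg _ _).trans (hK 0)
  set η := ε / (2 * (K + 1)) with hη
  have hη0 : 0 < η := by positivity
  obtain ⟨C, hC0, hC⟩ := rpow_add_eps (p := 2 * σ + 2) (by linarith) hη0
  have iU := pPow_integrable hN hσ hq hB U
  have iv := fun n => pPow_integrable hN hσ hq hB (v n)
  have iw := fun n => pPow_integrable hN hσ hq hB (w n)
  let W : ℕ → Esp N → ℝ := fun n x => max 0 (‖(w n).u x‖ ^ (2 * σ + 2) - (1 + η) * ‖(v n).u x‖ ^ (2 * σ + 2) -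
    ‖U.u x‖ ^ (2 * σ + 2))
  have ib : ∀ n, Integrable (fun x => ‖(w n).u x‖ ^ (2 * σ + 2) - (1 + η) * ‖(v n).u x‖ ^ (2 * σ + 2) -
    ‖U.u x‖ ^ (2 * σ + 2)) := fun n => ((iw n).sub ((iv n).const_mul _)).sub iU
  have iW : ∀ n, Integrable (W n) := fun n => (integrable_zero _ _ _).sup (ib n)
  have hlim : Tendsto (fun n => ∫ x, W n x) atTop (𝓝 (∫ x : Esp N, (0:ℝ))) := by
    refine tendsto_integral_of_dominated_convergence (fun x => C * ‖U.u x‖ ^ (2 * σ + 2)) (fun n => (iW n).1)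
      (iU.const_mul _) ?_ ?_
    · intro n
      refine Eventually.of_forall fun x => ?_
      rw [Real.norm_of_nonneg (le_max_left _ _)]
      refine max_le (by positivity) ?_
      have h1 : ‖(w n).u x‖ ^ (2 * σ + 2) ≤ (‖U.u x‖ + ‖(v n).u x‖) ^ (2 * σ + 2) := by
        gcongr; rw [hwv]; exact norm_add_le _ _
      have h2 := hC ‖U.u x‖ ‖(v n).u x‖ (norm_nonneg _) (norm_nonneg _)
      have h3 : 0 ≤ ‖U.u x‖ ^ (2 * σ + 2) := by positivity
      linarith
    · filter_upwards [hae] with x hx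
      have h1 : Tendsto (fun n => ‖(w n).u x‖ ^ (2 * σ + 2)) atTop (𝓝 (‖U.u x‖ ^ (2 * σ + 2))) := by
        simp only [hwv]
        have := ((hx.const_add (U.u x)).norm).rpow_const (p := 2 * σ + 2) (Or.inr hp.le)
        simpa using this
      have h2 : Tendsto (fun n => ‖(v n).u x‖ ^ (2 * σ + 2)) atTop (𝓝 0) := by
        have := (hx.norm).rpow_const (p := 2 * σ + 2) (Or.inr hp.le)
        simpa [Real.zero_rpow hp.ne'] using this
      have h3 := (tendsto_const_nhds (x := (0:ℝ))).max ((h1.sub (h2.const_mul (1 + η))).sub_const (‖U.u x‖ ^ (2 * σ + 2)))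
      simpa using h3
  rw [integral_zero] at hlim
  filter_upwards [hlim.eventually (eventually_lt_nhds (half_pos hε))] with n hn
  have h1 : ∫ x, (‖(w n).u x‖ ^ (2 * σ + 2) - (1 + η) * ‖(v n).u x‖ ^ (2 * σ + 2) - ‖U.u x‖ ^ (2 * σ + 2)) ≤ ∫ x, W n x :=
    integral_mono (ib n) (iW n) fun x => le_max_right _ _
  have ic : Integrable (fun x => ‖(w n).u x‖ ^ (2 * σ + 2) - (1 + η) * ‖(v n).u x‖ ^ (2 * σ + 2)) :=
    (iw n).sub ((iv n).const_mul _)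
  rw [integral_sub ic iU, integral_sub (iw n) ((iv n).const_mul _),
    integral_const_mul] at h1
  change (w n).pPow σ - (1 + η) * (v n).pPow σ - U.pPow σ ≤ _ at h1
  have h2 : η * (v n).pPow σ ≤ ε / 2 := by
    calc η * (v n).pPow σ ≤ η * (K + 1) := by gcongr; linarith [hK n]
      _ = ε / 2 := by rw [hη]; field_simp
  linarith

end H2

end


open MeasureTheory Filter Topology

noncomputable section

open scoped SchwartzMap FourierTransform LineDeriv

namespace H2
variable {N : ℕ} {σ : ℝ}

theorem grad_i_le (U : H2 N) {C : ℝ} (hM : U.massSq ≤ C) (hL : U.lapSq ≤ C) (i : Fin N) :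
    ∫ x, ‖U.grad i x‖ ^ 2 ≤ C := by
  have hC : 0 ≤ C := U.massSq_nonneg.trans hM
  have h1 : ∫ x, ‖U.grad i x‖ ^ 2 ≤ U.gradSq := by
    unfold gradSq
    exact Finset.single_le_sum (f := fun i => ∫ x, ‖U.grad i x‖ ^ 2)
      (fun _ _ => integral_nonneg fun _ => by positivity) (Finset.mem_univ i)
  refine h1.trans (abs_le_of_sq_le_sq' ?_ hC).2
  refine U.grad_interp.trans ?_
  rw [sq]
  exact mul_le_mul hL hM U.massSq_nonneg hC

/-- Weak limits of bounded sequences of `H²`. -/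
theorem weak_limit {w : ℕ → H2 N} {C : ℝ} (hM : ∀ n, (w n).massSq ≤ C) (hL : ∀ n, (w n).lapSq ≤ C) :
    ∃ ψ : ℕ → ℕ, StrictMono ψ ∧ ∃ U : H2 N, WeakTo (fun n => (w (ψ n)).u) U.u ∧
      (∀ i, WeakTo (fun n => (w (ψ n)).grad i) (U.grad i)) ∧ WeakTo (fun n => (w (ψ n)).lapl) U.lapl := by
  obtain ⟨ψ₁, hψ₁, g, hg, hw₁⟩ := weak_ext (fun n => (w n).u) (fun n => (w n).u_mem) C hM
  obtain ⟨ψ₂, hψ₂, l, hl, hw₂⟩ := weak_ext (fun n => (w (ψ₁ n)).lapl) (fun n => (w (ψ₁ n)).lapl_mem) C (fun n => hL _)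
  obtain ⟨ψ₃, hψ₃, h⟩ := weak_ext_finset Finset.univ (fun i n => (w (ψ₁ (ψ₂ n))).grad i)
    (fun i n => (w (ψ₁ (ψ₂ n))).grad_mem i) C (fun i n => grad_i_le _ (hM _) (hL _) i)
  choose d hd hw₃ using fun i => h i (Finset.mem_univ i)
  have hw₁' := (hw₁.comp hψ₂).comp hψ₃
  have hw₂' := hw₂.comp hψ₃
  have sw : ∀ (f φ : Esp N → ℂ), ∫ x, f x * φ x = ∫ x, φ x * f x := fun f φ => by simp only [mul_comm]
  refine ⟨fun n => ψ₁ (ψ₂ (ψ₃ n)), (hψ₁.comp hψ₂).comp hψ₃,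
    ⟨g, d, l, hg, hd, hl, ?_, ?_⟩, hw₁', hw₃, hw₂'⟩
  · intro i φ hφ
    have a1 := hw₁' _ ((hφ.pderivC i).memLp 2)
    have a2 := hw₃ i _ (hφ.memLp 2)
    rw [sw g, sw (d i)]
    refine tendsto_nhds_unique a1 (a2.neg.congr fun n => ?_)
    have := ((w (ψ₁ (ψ₂ (ψ₃ n)))).grad_spec i φ hφ).symm
    rw [sw _ φ, sw _ (pderivC i φ)] at this
    exact this
  · intro φ hφ
    have a1 := hw₁' _ (hφ.lapC.memLp 2)
    have a2 := hw₂' _ (hφ.memLp 2)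
    rw [sw g, sw l]
    refine tendsto_nhds_unique a1 (a2.congr fun n => ?_)
    have := ((w (ψ₁ (ψ₂ (ψ₃ n)))).lapl_spec φ hφ).symm
    rw [sw _ φ, sw _ (lapC φ)] at this
    exact this

theorem WeakTo_sub {f : ℕ → Esp N → ℂ} {g : Esp N → ℂ} (hf : ∀ n, L2m (f n)) (hg : L2m g) (hw : WeakTo f g) :
    WeakTo (fun n x => f n x - g x) (fun _ => 0) := by
  intro h hh
  have := (hw h hh).sub_const (∫ x, h x * g x)
  simp only [sub_self] at this
  simp only [mul_zero, integral_zero]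
  refine this.congr fun n => ?_
  rw [← integral_sub (integrable_mul_L2 hh (hf n)) (integrable_mul_L2 hh hg)]
  simp only [mul_sub]

theorem compactness (hN : 1 ≤ N) (hσ : 0 < σ) (hq : 0 < 1 + σ - (N : ℝ) * σ / 4) (hB : 0 < GNconst N σ)
    {w : ℕ → H2 N} {C c : ℝ} (hM : ∀ n, (w n).massSq ≤ C) (hL : ∀ n, (w n).lapSq ≤ C) (hc : 0 < c)
    (hP : ∀ n, c ≤ (w n).pPow σ) :
    ∃ (ψ : ℕ → ℕ) (xs : ℕ → Esp N) (U : H2 N) (v : ℕ → H2 N), StrictMono ψ ∧ U.Nontriv ∧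
      (∀ k, v k = ((w (ψ k)).aff 1 1 one_pos (xs k)).sub U) ∧
      Tendsto (fun k => (v k).massSq + U.massSq - (w (ψ k)).massSq) atTop (𝓝 0) ∧
      Tendsto (fun k => (v k).gradSq + U.gradSq - (w (ψ k)).gradSq) atTop (𝓝 0) ∧
      Tendsto (fun k => (v k).lapSq + U.lapSq - (w (ψ k)).lapSq) atTop (𝓝 0) ∧
      ∀ ε > 0, ∀ᶠ k in atTop, (w (ψ k)).pPow σ ≤ U.pPow σ + (v k).pPow σ + ε := by
  have hC0 : 0 ≤ C := (massSq_nonneg _).trans (hM 0)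
  obtain ⟨Φ, hΦ, δ, hδ, hnv⟩ := nonvanish hN hσ hq hB (C := C + 1) hc (by linarith)
  choose ys hys using fun n => hnv (w n) ((hM n).trans (by linarith)) ((hL n).trans (by linarith)) (hP n)
  let t : ℕ → H2 N := fun n => (w n).aff 1 1 one_pos (ys n)
  have tM : ∀ n, (t n).massSq = (w n).massSq := fun n => by simp [t, massSq_aff]
  have tL : ∀ n, (t n).lapSq = (w n).lapSq := fun n => by simp [t, lapSq_aff]
  have tG : ∀ n, (t n).gradSq = (w n).gradSq := fun n => by simp [t, gradSq_aff]
  have tP : ∀ n, (t n).pPow σ = (w n).pPow σ := fun n => by simp [t, pPow_aff]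
  obtain ⟨ψ₁, hψ₁, U, hu, hg, hl⟩ := weak_limit (w := t) (C := C) (fun n => (tM n).trans_le (hM n))
    (fun n => (tL n).trans_le (hL n))
  have hUn : U.Nontriv := by
    intro h0
    have h1 := smooth_weak Φ hΦ hu 0
    have h2 : Sop Φ U.u 0 = 0 := by
      unfold Sop
      rw [integral_eq_zero_of_ae]
      filter_upwards [h0] with y hy
      simp [hy]
    rw [h2] at h1
    have h3 := h1.norm
    rw [norm_zero] at h3
    have h4 := ge_of_tendsto h3 (Eventually.of_forall fun n => by
      have := hys (ψ₁ n)
      rw [← smooth_trans] at this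
      exact this)
    linarith
  let v₁ : ℕ → H2 N := fun n => (t (ψ₁ n)).sub U
  have s1 : Tendsto (fun n => (v₁ n).massSq + U.massSq - (t (ψ₁ n)).massSq) atTop (𝓝 0) :=
    weak_split (fun n => (t (ψ₁ n)).u_mem) U.u_mem hu
  have s2 : Tendsto (fun n => (v₁ n).lapSq + U.lapSq - (t (ψ₁ n)).lapSq) atTop (𝓝 0) :=
    weak_split (fun n => (t (ψ₁ n)).lapl_mem) U.lapl_mem hl
  have s3 : Tendsto (fun n => (v₁ n).gradSq + U.gradSq - (t (ψ₁ n)).gradSq) atTop (𝓝 0) := by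
    have := tendsto_finsetSum Finset.univ (fun i _ => weak_split (fun n => (t (ψ₁ n)).grad_mem i) (U.grad_mem i) (hg i))
    simp only [Finset.sum_const_zero, Finset.sum_sub_distrib, Finset.sum_add_distrib] at this
    exact this
  obtain ⟨A1, hA1⟩ := s1.bddAbove_range
  obtain ⟨A2, hA2⟩ := s2.bddAbove_range
  have b1 : ∀ n, (v₁ n).massSq ≤ |A1| + |A2| + C := fun n => by
    have h1 := hA1 ⟨n, rfl⟩
    simp only at h1
    have h2 := hM (ψ₁ n)
    rw [← tM] at h2
    have := U.massSq_nonneg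
    have := le_abs_self A1
    have := abs_nonneg A2
    linarith
  have b2 : ∀ n, (v₁ n).lapSq ≤ |A1| + |A2| + C := fun n => by
    have h1 := hA2 ⟨n, rfl⟩
    simp only at h1
    have h2 := hL (ψ₁ n)
    rw [← tL] at h2
    have := U.lapSq_nonneg
    have := le_abs_self A2
    have := abs_nonneg A1
    linarith
  obtain ⟨ψ₂, hψ₂, hae⟩ := ae_conv b1 b2 (WeakTo_sub (fun n => (t (ψ₁ n)).u_mem) U.u_mem hu)
  refine ⟨fun n => ψ₁ (ψ₂ n), fun n => ys (ψ₁ (ψ₂ n)), U, fun n => v₁ (ψ₂ n), hψ₁.comp hψ₂, hUn, fun k => rfl, ?_, ?_, ?_, ?_⟩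
  · simpa [tM, Function.comp_def] using s1.comp hψ₂.tendsto_atTop
  · simpa [tG, Function.comp_def] using s3.comp hψ₂.tendsto_atTop
  · simpa [tL, Function.comp_def] using s2.comp hψ₂.tendsto_atTop
  · intro ε hε
    have := BL hN hσ hq.le hB (w := fun n => t (ψ₁ (ψ₂ n))) (v := fun n => v₁ (ψ₂ n)) (U := U)
      (fun n x => by simp [v₁, sub]) (K := gnR N σ (|A1| + |A2| + C) (|A1| + |A2| + C))
      (fun n => (GN_raw hN hσ hB _).trans (gnR_mono hB hσ.le hq.le (lapSq_nonneg _) (massSq_nonneg _) (b2 _) (b1 _)))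
      hae hε
    simpa [tP] using this

end H2

end


open MeasureTheory Filter Topology

noncomputable section

/-- The constant in front of the potential energy in `D`. -/
def kap (N : ℕ) (σ : ℝ) : ℝ := (N : ℝ) * σ / (4 * (σ + 1)) * ((N : ℝ) * σ / 2 - 1)

/-- The ratio `(Nσ-2)/(Nσ-4)`. -/
def rho (N : ℕ) (σ : ℝ) : ℝ := ((N : ℝ) * σ - 2) / ((N : ℝ) * σ - 4)

/-- The standing hypotheses. -/
structure Hyp (N : ℕ) (σ : ℝ) : Prop where
  hN : 1 ≤ N
  hσ : 0 < σ
  ha : 4 < (N : ℝ) * σ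
  hq : 0 < 1 + σ - (N : ℝ) * σ / 4
  hB : 0 < GNconst N σ

namespace Hyp
variable {N : ℕ} {σ : ℝ}

theorem kap_pos (H : Hyp N σ) : 0 < kap N σ := by
  have := H.ha; have := H.hσ
  unfold kap
  have h1 : 0 < (N : ℝ) * σ / 2 - 1 := by linarith
  have h2 : 0 < (N : ℝ) * σ := by linarith
  positivity

theorem rho_gt (H : Hyp N σ) : 1 < rho N σ := by
  have := H.ha
  unfold rho
  rw [one_lt_div (by linarith)]; linarith

theorem inv_rho (H : Hyp N σ) : 1 / rho N σ = 1 - 1 / ((N : ℝ) * σ / 2 - 1) := by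
  have := H.ha
  have h1 : (N : ℝ) * σ - 2 ≠ 0 := by linarith
  have h2 : (N : ℝ) * σ - 4 ≠ 0 := by linarith
  have h3 : (N : ℝ) * σ / 2 - 1 ≠ 0 := by linarith
  unfold rho
  rw [one_div_div, eq_sub_iff_add_eq, div_add_div _ _ h1 h3, div_eq_one_iff_eq (mul_ne_zero h1 h3)]
  ring

theorem good (H : Hyp N σ) {m : ℝ} (hm : 0 < m) (hm2 : m < mu0 N σ) :
    kap N σ * (GNconst N σ * (rho N σ ^ 2 * m) ^ ((N : ℝ) * σ / 4 - 1) * m ^ (1 + σ - (N : ℝ) * σ / 4)) < 1 := by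
  have hk := H.kap_pos
  have hr := H.rho_gt
  have hB := H.hB
  have hσ := H.hσ
  have hr0 : 0 < rho N σ := by linarith
  have h1 : m ^ σ < (GNconst N σ)⁻¹ * (kap N σ)⁻¹ * rho N σ ^ (2 - (N : ℝ) * σ / 2) := by
    have h2 := Real.rpow_lt_rpow hm.le hm2 hσ
    refine h2.trans_eq ?_
    change (GNconst N σ ^ (-(1 / σ)) * kap N σ ^ (-(1 / σ)) * rho N σ ^ (2 / σ - (N : ℝ) / 2)) ^ σ = _
    rw [Real.mul_rpow (by positivity) (by positivity), Real.mul_rpow (by positivity) (by positivity),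
      ← Real.rpow_mul hB.le, ← Real.rpow_mul hk.le, ← Real.rpow_mul hr0.le]
    have e1 : -(1 / σ) * σ = -1 := by field_simp
    have e2 : (2 / σ - (N : ℝ) / 2) * σ = 2 - (N : ℝ) * σ / 2 := by field_simp
    rw [e1, e2, Real.rpow_neg_one, Real.rpow_neg_one]
  have h3 : kap N σ * (GNconst N σ * (rho N σ ^ 2 * m) ^ ((N : ℝ) * σ / 4 - 1) * m ^ (1 + σ - (N : ℝ) * σ / 4))
      = kap N σ * GNconst N σ * rho N σ ^ ((N : ℝ) * σ / 2 - 2) * m ^ σ := by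
    rw [Real.mul_rpow (by positivity) hm.le, ← Real.rpow_natCast, ← Real.rpow_mul hr0.le]
    have e1 : ((2 : ℕ) : ℝ) * ((N : ℝ) * σ / 4 - 1) = (N : ℝ) * σ / 2 - 2 := by push_cast; ring
    have e2 : m ^ σ = m ^ ((N : ℝ) * σ / 4 - 1) * m ^ (1 + σ - (N : ℝ) * σ / 4) := by
      rw [← Real.rpow_add hm]; congr 1; ring
    rw [e1, e2]; ring
  rw [h3]
  calc _ < kap N σ * GNconst N σ * rho N σ ^ ((N : ℝ) * σ / 2 - 2) *
      ((GNconst N σ)⁻¹ * (kap N σ)⁻¹ * rho N σ ^ (2 - (N : ℝ) * σ / 2)) := by gcongr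
    _ = (rho N σ ^ ((N : ℝ) * σ / 2 - 2) * rho N σ ^ (2 - (N : ℝ) * σ / 2)) := by field_simp
    _ = 1 := by rw [← Real.rpow_add hr0]; ring_nf; simp

theorem gn' (H : Hyp N σ) (U : H2 N) {x m : ℝ} (hU : U.Nontriv) (hL : U.lapSq ≤ x) (hM : U.massSq ≤ m) :
    U.pPow σ ≤ U.lapSq * (GNconst N σ * x ^ ((N : ℝ) * σ / 4 - 1) * m ^ (1 + σ - (N : ℝ) * σ / 4)) := by
  have hL0 := H2.lap_pos H.hN U hU
  have hB := H.hB
  have := H.ha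
  refine (H2.GN_raw H.hN H.hσ H.hB U).trans ?_
  unfold gnR
  have e : U.lapSq ^ ((N : ℝ) * σ / 4) = U.lapSq * U.lapSq ^ ((N : ℝ) * σ / 4 - 1) := by
    rw [Real.rpow_sub_one hL0.ne']; field_simp
  rw [e]
  have h0 := U.massSq_nonneg
  have h1 : U.lapSq ^ ((N : ℝ) * σ / 4 - 1) ≤ x ^ ((N : ℝ) * σ / 4 - 1) :=
    Real.rpow_le_rpow hL0.le hL (by linarith)
  have h2 : U.massSq ^ (1 + σ - (N : ℝ) * σ / 4) ≤ m ^ (1 + σ - (N : ℝ) * σ / 4) :=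
    Real.rpow_le_rpow h0 hM H.hq.le
  have h3 : 0 ≤ x := hL0.le.trans hL
  calc _ = U.lapSq * (GNconst N σ * U.lapSq ^ ((N : ℝ) * σ / 4 - 1) * U.massSq ^ (1 + σ - (N : ℝ) * σ / 4)) := by ring
    _ ≤ _ := by gcongr

theorem D_pos_of (H : Hyp N σ) {m : ℝ} (hm : 0 < m) (hm2 : m < mu0 N σ) {U : H2 N} (hU : U.Nontriv)
    (hL : U.lapSq ≤ rho N σ ^ 2 * m) (hM : U.massSq ≤ m) : 0 < Dfun σ U := by
  have h1 := H.gn' U hU hL hM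
  have h2 := H.good hm hm2
  have hL0 := H2.lap_pos H.hN U hU
  have hk := H.kap_pos
  change 0 < U.lapSq - kap N σ * U.pPow σ
  have h3 := mul_le_mul_of_nonneg_left h1 hk.le
  have h4 := mul_lt_mul_of_pos_left h2 hL0
  linarith

theorem memO_of (H : Hyp N σ) {U : H2 N} (hU : U.Nontriv) (hM : U.massSq < mu0 N σ) (hD : 0 < Dfun σ U) : memO σ U := by
  refine ⟨hU, hD, ?_⟩
  have ha := H.ha
  have hσ := H.hσ
  have hB := H.hB
  have hL := H2.lap_pos H.hN U hU
  have hP := H2.pPow_pos H.hN H.hσ H.hq.le H.hB U hU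
  have hm := H2.massSq_pos_iff.2 hU
  have hk := H.kap_pos
  have hr := H.rho_gt
  have hG := U.grad_interp
  have hG0 := U.gradSq_nonneg
  set s := tInfl σ U with hs
  have es : s = (U.lapSq / (kap N σ * U.pPow σ)) ^ (1 / ((N : ℝ) * σ / 2 - 2)) := by
    rw [hs]; unfold tInfl kap
    congr 1
    · have : (N : ℝ) * σ - 2 ≠ 0 := by linarith
      have : (N : ℝ) * σ / 2 - 1 ≠ 0 := by linarith
      have : (N : ℝ) * σ ≠ 0 := by linarith
      have : σ + 1 ≠ 0 := by linarith
      rw [div_eq_div_iff (by positivity) (by positivity)]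
      field_simp
      ring
    · rw [div_eq_div_iff (by linarith) (by linarith)]; ring
  have s0 : 0 < s := by rw [es]; positivity
  have s1 : s ^ ((N : ℝ) * σ / 2 - 2) = U.lapSq / (kap N σ * U.pPow σ) := by
    rw [es, ← Real.rpow_mul (by positivity), one_div_mul_cancel (by linarith), Real.rpow_one]
  have hder : HasDerivAt (phiFun σ U) (2 * s * U.lapSq - 2 * U.gradSq -
      ((N : ℝ) * σ / 2 * s ^ ((N : ℝ) * σ / 2 - 1)) / (σ + 1) * U.pPow σ) s := by
    unfold phiFun
    have h1 := (((hasDerivAt_id s).pow 2).mul_const U.lapSq)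
    have h2 := (((hasDerivAt_id s).const_mul 2).mul_const U.gradSq)
    have h3 := (((Real.hasDerivAt_rpow_const (x := s) (p := (N : ℝ) * σ / 2) (Or.inl s0.ne')).div_const (σ + 1)).mul_const (U.pPow σ))
    refine HasDerivAt.congr_deriv (f := fun t : ℝ => t ^ 2 * U.lapSq - 2 * t * U.gradSq - t ^ ((N : ℝ) * σ / 2) / (σ + 1) * U.pPow σ)
      ((h1.sub h2).sub h3) ?_
    simp
  rw [hder.deriv]
  have e1 : s ^ ((N : ℝ) * σ / 2 - 1) = s * (U.lapSq / (kap N σ * U.pPow σ)) := by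
    rw [← s1, mul_comm s, ← Real.rpow_add_one s0.ne']; congr 1; ring
  have e2 : ((N : ℝ) * σ / 2 * s ^ ((N : ℝ) * σ / 2 - 1)) / (σ + 1) * U.pPow σ = 2 * s * U.lapSq * (1 / ((N : ℝ) * σ / 2 - 1)) := by
    rw [e1]; unfold kap
    have : (N : ℝ) * σ / 2 - 1 ≠ 0 := by linarith
    have : (N : ℝ) * σ - 2 ≠ 0 := by linarith
    have : (N : ℝ) ≠ 0 := Nat.cast_ne_zero.2 (by have := H.hN; omega)
    have : σ + 1 ≠ 0 := by linarith
    field_simp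
    ring
  rw [e2]
  have e3 : 2 * s * U.lapSq - 2 * U.gradSq - 2 * s * U.lapSq * (1 / ((N : ℝ) * σ / 2 - 1)) =
      2 * (s * U.lapSq * (1 / rho N σ) - U.gradSq) := by rw [H.inv_rho]; ring
  rw [e3]
  -- main inequality
  have key : rho N σ ^ 2 * U.massSq < s ^ 2 * U.lapSq := by
    by_contra hcon
    push Not at hcon
    have h1 := H.good hm hM
    have h2 : (s ^ 2 * U.lapSq) ^ ((N : ℝ) * σ / 4 - 1) ≤ (rho N σ ^ 2 * U.massSq) ^ ((N : ℝ) * σ / 4 - 1) :=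
      Real.rpow_le_rpow (by positivity) hcon (by linarith)
    have h3 : (s ^ 2 * U.lapSq) ^ ((N : ℝ) * σ / 4 - 1) = (U.lapSq / (kap N σ * U.pPow σ)) * U.lapSq ^ ((N : ℝ) * σ / 4 - 1) := by
      rw [Real.mul_rpow (by positivity) hL.le, ← s1, ← Real.rpow_natCast, ← Real.rpow_mul s0.le]
      congr 2; push_cast; ring
    have h4 := H.gn' U hU le_rfl le_rfl
    rw [h3] at h2
    have h5 : (U.lapSq / (kap N σ * U.pPow σ)) * U.lapSq ^ ((N : ℝ) * σ / 4 - 1) * (kap N σ * (GNconst N σ * U.massSq ^ (1 + σ - (N : ℝ) * σ / 4))) < 1 := by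
      calc _ ≤ (rho N σ ^ 2 * U.massSq) ^ ((N : ℝ) * σ / 4 - 1) * (kap N σ * (GNconst N σ * U.massSq ^ (1 + σ - (N : ℝ) * σ / 4))) := by gcongr
        _ = _ := by ring
        _ < 1 := h1
    have h6 : (U.lapSq / (kap N σ * U.pPow σ)) * U.lapSq ^ ((N : ℝ) * σ / 4 - 1) * (kap N σ * (GNconst N σ * U.massSq ^ (1 + σ - (N : ℝ) * σ / 4))) =
        (U.lapSq * (GNconst N σ * U.lapSq ^ ((N : ℝ) * σ / 4 - 1) * U.massSq ^ (1 + σ - (N : ℝ) * σ / 4))) / U.pPow σ := by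
      field_simp
    rw [h6, div_lt_one hP] at h5
    linarith
  have h7 : U.gradSq < s * U.lapSq * (1 / rho N σ) := by
    refine lt_of_pow_lt_pow_left₀ 2 (by positivity) (hG.trans_lt ?_)
    have : (s * U.lapSq * (1 / rho N σ)) ^ 2 = (s ^ 2 * U.lapSq) * U.lapSq / rho N σ ^ 2 := by field_simp
    rw [this, lt_div_iff₀ (by positivity)]
    nlinarith
  linarith

end Hyp

end


open MeasureTheory Filter Topology

noncomputable section

namespace H2
variable {N : ℕ} {σ : ℝ}

/-- `√l · u_t` -/
def scl (U : H2 N) (l t : ℝ) (ht : 0 < t) : H2 N :=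
  U.aff (√l * t ^ ((N : ℝ) / 4)) (√t) (Real.sqrt_pos.2 ht) 0

theorem sqrt_pow_nat {t : ℝ} (ht : 0 < t) : (√t) ^ N = t ^ ((N : ℝ) / 2) := by
  rw [Real.sqrt_eq_rpow, ← Real.rpow_natCast, ← Real.rpow_mul ht.le]; congr 1; ring

theorem scl_aux {l t : ℝ} (hl : 0 ≤ l) (ht : 0 < t) :
    (√l * t ^ ((N : ℝ) / 4)) ^ 2 * ((√t) ^ N)⁻¹ = l := by
  rw [sqrt_pow_nat ht, mul_pow, Real.sq_sqrt hl, ← Real.rpow_natCast (t ^ ((N : ℝ) / 4)), ← Real.rpow_mul ht.le]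
  have : (N : ℝ) / 4 * ((2 : ℕ) : ℝ) = (N : ℝ) / 2 := by push_cast; ring
  rw [this]
  have : t ^ ((N : ℝ) / 2) ≠ 0 := (Real.rpow_pos_of_pos ht _).ne'
  field_simp

theorem scl_mass (U : H2 N) {l t : ℝ} (hl : 0 ≤ l) (ht : 0 < t) : (U.scl l t ht).massSq = l * U.massSq := by
  unfold scl; rw [massSq_aff, scl_aux hl ht]

theorem scl_lap (U : H2 N) {l t : ℝ} (hl : 0 ≤ l) (ht : 0 < t) : (U.scl l t ht).lapSq = l * t ^ 2 * U.lapSq := by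
  unfold scl; rw [lapSq_aff, scl_aux hl ht]
  have : (√t) ^ 4 = t ^ 2 := by
    rw [show 4 = 2 * 2 from rfl, pow_mul, Real.sq_sqrt ht.le]
  rw [this]

theorem scl_grad (U : H2 N) {l t : ℝ} (hl : 0 ≤ l) (ht : 0 < t) : (U.scl l t ht).gradSq = l * t * U.gradSq := by
  unfold scl; rw [gradSq_aff, scl_aux hl ht, Real.sq_sqrt ht.le]

theorem scl_p (U : H2 N) {l t : ℝ} (hl : 0 ≤ l) (ht : 0 < t) :
    (U.scl l t ht).pPow σ = l ^ (σ + 1) * t ^ ((N : ℝ) * σ / 2) * U.pPow σ := by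
  unfold scl; rw [pPow_aff, sqrt_pow_nat ht, abs_of_nonneg (by positivity), Real.mul_rpow (by positivity) (by positivity),
    Real.sqrt_eq_rpow, ← Real.rpow_mul hl, ← Real.rpow_mul ht.le]
  have e1 : 1 / 2 * (2 * σ + 2) = σ + 1 := by ring
  have e2 : t ^ ((N : ℝ) / 4 * (2 * σ + 2)) = t ^ ((N : ℝ) * σ / 2) * t ^ ((N : ℝ) / 2) := by
    rw [← Real.rpow_add ht]; congr 1; ring
  rw [e1, e2]
  have : t ^ ((N : ℝ) / 2) ≠ 0 := (Real.rpow_pos_of_pos ht _).ne'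
  field_simp

theorem scl_energy (U : H2 N) {l t : ℝ} (hl : 0 < l) (ht : 0 < t) :
    (U.scl l t ht).energy σ = l * phiFun σ U t - (l ^ (σ + 1) - l) * t ^ ((N : ℝ) * σ / 2) * U.pPow σ / (σ + 1) := by
  unfold energy phiFun
  rw [scl_lap U hl.le ht, scl_grad U hl.le ht, scl_p U hl.le ht]
  ring

theorem scl_nontriv {U : H2 N} (hU : U.Nontriv) {l t : ℝ} (hl : 0 < l) (ht : 0 < t) : (U.scl l t ht).Nontriv := by
  rw [← massSq_pos_iff] at *
  rw [scl_mass U hl.le ht]; positivity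

theorem grad_le_sqrt (U : H2 N) : U.gradSq ≤ √U.lapSq * √U.massSq := by
  have h := U.grad_interp
  have h1 := U.lapSq_nonneg
  have h2 := U.massSq_nonneg
  refine (abs_le_of_sq_le_sq' ?_ (by positivity)).2
  rwa [mul_pow, Real.sq_sqrt h1, Real.sq_sqrt h2]

theorem phi_one (U : H2 N) : phiFun σ U 1 = U.energy σ := by
  unfold phiFun energy; simp

end H2

namespace Hyp
variable {N : ℕ} {σ : ℝ}

theorem P_lt (H : Hyp N σ) {U : H2 N} (hD : 0 < Dfun σ U) :
    (N : ℝ) * σ / 2 * (1 / (σ + 1) * U.pPow σ) ≤ 2 * U.lapSq * (1 / ((N : ℝ) * σ / 2 - 1)) := by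
  have ha := H.ha
  have hσ := H.hσ
  unfold Dfun at hD
  rw [mul_one_div, le_div_iff₀ (by linarith)]
  have : (N : ℝ) * σ / (4 * (σ + 1)) = (N : ℝ) * σ / 4 * (1 / (σ + 1)) := by
    have : σ + 1 ≠ 0 := by linarith
    field_simp
  rw [this] at hD
  linarith

/-- The energy drop along the scaling. -/
theorem drop (H : Hyp N σ) {U : H2 N} (hD : 0 < Dfun σ U) {t : ℝ} (ht : 0 < t) (ht1 : t ≤ 1) :
    phiFun σ U t + (1 - t) * ((1 + t) * U.lapSq / rho N σ - 2 * U.gradSq) ≤ U.energy σ := by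
  have hP := H.P_lt hD
  have ha := H.ha
  have hσ := H.hσ
  have hb : 1 + ((N : ℝ) * σ / 4) * (t ^ 2 - 1) ≤ (1 + (t ^ 2 - 1)) ^ ((N : ℝ) * σ / 4) :=
    one_add_mul_self_le_rpow_one_add (by nlinarith) (by linarith)
  have e : (1 + (t ^ 2 - 1)) ^ ((N : ℝ) * σ / 4) = t ^ ((N : ℝ) * σ / 2) := by
    rw [add_sub_cancel, ← Real.rpow_natCast, ← Real.rpow_mul ht.le]; congr 1; push_cast; ring
  rw [e] at hb
  have hP0 := U.pPow_nonneg σ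
  set Q := 1 / (σ + 1) * U.pPow σ with hQ
  have hQ0 : 0 ≤ Q := by positivity
  have e2 : phiFun σ U t = t ^ 2 * U.lapSq - 2 * t * U.gradSq - t ^ ((N : ℝ) * σ / 2) * Q := by
    unfold phiFun; rw [hQ]; ring
  have e3 : U.energy σ = U.lapSq - 2 * U.gradSq - Q := rfl
  have e4 : (1 + t) * U.lapSq / rho N σ = (1 + t) * U.lapSq * (1 / rho N σ) := by ring
  rw [e2, e3, e4, H.inv_rho]
  have h1 : (1 - t ^ ((N : ℝ) * σ / 2)) * Q ≤ ((N : ℝ) * σ / 4 * (1 - t ^ 2)) * Q := by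
    gcongr; linarith
  have h2 := mul_le_mul_of_nonneg_left hP (show 0 ≤ (1 - t ^ 2) / 2 by nlinarith)
  generalize 1 / ((N : ℝ) * σ / 2 - 1) = b at *
  linarith

theorem E_lower (H : Hyp N σ) {U : H2 N} (hD : 0 < Dfun σ U) :
    U.lapSq ≤ 2 * rho N σ * U.energy σ + 4 * rho N σ ^ 2 * U.massSq := by
  have hP := H.P_lt hD
  have ha := H.ha
  have hr := H.rho_gt
  have hL := U.lapSq_nonneg
  have hM := U.massSq_nonneg
  have hG := U.grad_le_sqrt
  have hP0 := U.pPow_nonneg σ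
  have hσ := H.hσ
  have hQ0 : 0 ≤ 1 / (σ + 1) * U.pPow σ := by positivity
  have e3 : U.energy σ = U.lapSq - 2 * U.gradSq - (1 / (σ + 1) * U.pPow σ) := rfl
  have h1 : U.lapSq * (1 / rho N σ) - 2 * U.gradSq ≤ U.energy σ := by
    rw [H.inv_rho, e3]
    nlinarith
  set x := √U.lapSq
  set y := √U.massSq
  have ex : U.lapSq = x ^ 2 := (Real.sq_sqrt hL).symm
  have ey : U.massSq = y ^ 2 := (Real.sq_sqrt hM).symm
  have h2 : U.lapSq ≤ rho N σ * (U.energy σ + 2 * (x * y)) := by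
    have h3 : U.lapSq = rho N σ * (U.lapSq * (1 / rho N σ)) := by field_simp
    rw [h3]
    gcongr
    linarith
  have : 0 ≤ (x - 2 * rho N σ * y) ^ 2 := sq_nonneg _
  rw [ex] at h2 ⊢
  rw [ey]
  nlinarith

theorem claimA (H : Hyp N σ) {m : ℝ} (hm : 0 < m) (hm2 : m < mu0 N σ)
    (hbdd : BddBelow {r : ℝ | ∃ U : H2 N, memO σ U ∧ U.massSq = m ∧ r = U.energy σ})
    {w : H2 N} (hw : w.Nontriv) (hD : 0 < Dfun σ w) :
    ∃ t : ℝ, 0 < t ∧ t ≤ 1 ∧ tildeE N σ m ≤ (m / w.massSq) * (w.energy σ -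
      (max 0 (√w.lapSq - rho N σ * √w.massSq)) ^ 2 / rho N σ) -
      ((m / w.massSq) ^ (σ + 1) - m / w.massSq) * t ^ ((N : ℝ) * σ / 2) * w.pPow σ / (σ + 1) := by
  have hr := H.rho_gt
  have hL := H2.lap_pos H.hN w hw
  have hM := H2.massSq_pos_iff.2 hw
  have hl : 0 < m / w.massSq := by positivity
  set x := √w.lapSq with hx
  set y := √w.massSq with hy
  have x0 : 0 < x := Real.sqrt_pos.2 hL
  have y0 : 0 < y := Real.sqrt_pos.2 hM
  have ex : w.lapSq = x ^ 2 := (Real.sq_sqrt hL.le).symm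
  have ey : w.massSq = y ^ 2 := (Real.sq_sqrt hM.le).symm
  have main : ∃ t : ℝ, 0 < t ∧ t ≤ 1 ∧ t ^ 2 * w.lapSq ≤ rho N σ ^ 2 * w.massSq ∧
      phiFun σ w t ≤ w.energy σ - (max 0 (x - rho N σ * y)) ^ 2 / rho N σ := by
    by_cases hc : x ≤ rho N σ * y
    · refine ⟨1, one_pos, le_rfl, ?_, ?_⟩
      · rw [ex, ey, one_pow, one_mul, ← mul_pow]; gcongr
      · rw [H2.phi_one, max_eq_left (by linarith)]; simp
    · push Not at hc
      have ht : 0 < rho N σ * y / x := by positivity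
      have ht1 : rho N σ * y / x ≤ 1 := by rw [div_le_one x0]; exact hc.le
      refine ⟨rho N σ * y / x, ht, ht1, ?_, ?_⟩
      · rw [ex, ey, div_pow, mul_pow]; exact le_of_eq (by field_simp)
      · have h := H.drop hD ht ht1
        have hG := w.grad_le_sqrt
        rw [max_eq_right (by linarith)]
        have h1 : (x - rho N σ * y) ^ 2 / rho N σ ≤ (1 - rho N σ * y / x) * ((1 + rho N σ * y / x) * w.lapSq / rho N σ - 2 * w.gradSq) := by
          calc (x - rho N σ * y) ^ 2 / rho N σ = (1 - rho N σ * y / x) * ((1 + rho N σ * y / x) * w.lapSq / rho N σ - 2 * (x * y)) := by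
                rw [ex]; field_simp; ring
            _ ≤ _ := by
                gcongr
        linarith
  obtain ⟨t, ht, ht1, h1, h2⟩ := main
  refine ⟨t, ht, ht1, ?_⟩
  have hmass : (w.scl (m / w.massSq) t ht).massSq = m := by
    rw [H2.scl_mass w hl.le ht]; field_simp
  have hnt := H2.scl_nontriv hw hl ht
  have hlap : (w.scl (m / w.massSq) t ht).lapSq ≤ rho N σ ^ 2 * m := by
    rw [H2.scl_lap w hl.le ht]
    calc m / w.massSq * t ^ 2 * w.lapSq = m / w.massSq * (t ^ 2 * w.lapSq) := by ring
      _ ≤ m / w.massSq * (rho N σ ^ 2 * w.massSq) := by gcongr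
      _ = _ := by field_simp
  have hO : memO σ (w.scl (m / w.massSq) t ht) :=
    H.memO_of hnt (hmass.trans_lt hm2) (H.D_pos_of hm hm2 hnt hlap hmass.le)
  have h3 : tildeE N σ m ≤ (w.scl (m / w.massSq) t ht).energy σ := csInf_le hbdd ⟨_, hO, hmass, rfl⟩
  refine h3.trans ?_
  rw [H2.scl_energy w hl ht]
  gcongr

theorem sub_add (H : Hyp N σ) {m : ℝ} (hm : 0 < m) (hm2 : m < mu0 N σ)
    (hbdd : BddBelow {r : ℝ | ∃ U : H2 N, memO σ U ∧ U.massSq = m ∧ r = U.energy σ})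
    {w : H2 N} (hM : w.massSq ≤ m) (hL : w.lapSq ≤ rho N σ ^ 2 * m) :
    w.massSq / m * tildeE N σ m ≤ w.energy σ ∧
      (w.Nontriv → w.massSq < m → w.massSq / m * tildeE N σ m < w.energy σ) := by
  have hσ := H.hσ
  by_cases hw : w.Nontriv
  · have hD := H.D_pos_of hm hm2 hw hL hM
    have hM0 := H2.massSq_pos_iff.2 hw
    have hr := H.rho_gt
    obtain ⟨t, ht, ht1, h⟩ := H.claimA hm hm2 hbdd hw hD
    have hP := H2.pPow_pos H.hN H.hσ H.hq.le H.hB w hw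
    have hl : 0 < m / w.massSq := by positivity
    set A := (max 0 (√w.lapSq - rho N σ * √w.massSq)) ^ 2 / rho N σ
    have hA : 0 ≤ A := by positivity
    set Z := ((m / w.massSq) ^ (σ + 1) - m / w.massSq) * t ^ ((N : ℝ) * σ / 2) * w.pPow σ / (σ + 1) with hZ
    have h2 : tildeE N σ m + Z ≤ m / w.massSq * w.energy σ := by
      have : m / w.massSq * (w.energy σ - A) ≤ m / w.massSq * w.energy σ := by gcongr; linarith
      linarith
    have h3 := mul_le_mul_of_nonneg_left h2 (show 0 ≤ w.massSq / m by positivity)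
    have e : w.massSq / m * (m / w.massSq * w.energy σ) = w.energy σ := by field_simp
    rw [e, mul_add] at h3
    have l1 : 1 ≤ m / w.massSq := by rwa [one_le_div hM0]
    refine ⟨?_, fun _ hlt => ?_⟩
    · have hZ0 : 0 ≤ Z := by
        have : m / w.massSq ≤ (m / w.massSq) ^ (σ + 1) := by
          have := Real.rpow_le_rpow_of_exponent_le l1 (show (1:ℝ) ≤ σ + 1 by linarith)
          simpa using this
        have : 0 ≤ (m / w.massSq) ^ (σ + 1) - m / w.massSq := by linarith
        positivity
      have : 0 ≤ w.massSq / m * Z := by positivity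
      linarith
    · have hZ0 : 0 < Z := by
        have l2 : 1 < m / w.massSq := by rwa [one_lt_div hM0]
        have : m / w.massSq < (m / w.massSq) ^ (σ + 1) := by
          have := Real.rpow_lt_rpow_of_exponent_lt l2 (show (1:ℝ) < σ + 1 by linarith)
          simpa using this
        have : 0 < (m / w.massSq) ^ (σ + 1) - m / w.massSq := by linarith
        positivity
      have : 0 < w.massSq / m * Z := by positivity
      linarith
  · refine ⟨?_, fun h => absurd h hw⟩
    have h0 : w.massSq = 0 := by
      by_contra hne
      exact hw (H2.massSq_pos_iff.1 (lt_of_le_of_ne w.massSq_nonneg (Ne.symm hne)))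
    have hp := H2.pPow_triv hσ w hw
    have hG := w.grad_interp
    rw [h0, mul_zero] at hG
    have hG0 : w.gradSq = 0 := by nlinarith [w.gradSq_nonneg]
    unfold H2.energy
    rw [h0, hp, hG0]
    simp [w.lapSq_nonneg]

end Hyp

end


open MeasureTheory Filter Topology

noncomputable section

namespace Hyp
variable {N : ℕ} {σ : ℝ}

theorem lap_limsup (H : Hyp N σ) {m : ℝ} (hm : 0 < m) (hm2 : m < mu0 N σ)
    (hbdd : BddBelow {r : ℝ | ∃ U : H2 N, memO σ U ∧ U.massSq = m ∧ r = U.energy σ})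
    {u : ℕ → H2 N} (hu : ∀ n, memO σ (u n)) (hM : Tendsto (fun n => (u n).massSq) atTop (𝓝 m))
    (hE : Tendsto (fun n => (u n).energy σ) atTop (𝓝 (tildeE N σ m))) :
    ∃ C : ℝ, (∀ n, (u n).massSq ≤ C) ∧ (∀ n, (u n).lapSq ≤ C) ∧
      ∃ b : ℕ → ℝ, Tendsto b atTop (𝓝 (rho N σ ^ 2 * m)) ∧ ∀ n, (u n).lapSq ≤ b n := by
  have hr := H.rho_gt
  have hσ := H.hσ
  obtain ⟨A1, hA1⟩ := hM.bddAbove_range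
  obtain ⟨A2, hA2⟩ := hE.bddAbove_range
  have hA1 : ∀ n, (u n).massSq ≤ A1 := fun n => hA1 ⟨n, rfl⟩
  have hA2 : ∀ n, (u n).energy σ ≤ A2 := fun n => hA2 ⟨n, rfl⟩
  set C := max A1 (2 * rho N σ * A2 + 4 * rho N σ ^ 2 * A1) with hC
  have cM : ∀ n, (u n).massSq ≤ C := fun n => (hA1 n).trans (le_max_left _ _)
  have cL : ∀ n, (u n).lapSq ≤ C := fun n => by
    refine (H.E_lower (hu n).2.1).trans (le_trans ?_ (le_max_right _ _))
    have h1 := hA1 n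
    have h2 := hA2 n
    gcongr
  refine ⟨C, cM, cL, ?_⟩
  set K := gnR N σ C C with hK
  have hP : ∀ n, (u n).pPow σ ≤ K := fun n => (H2.GN_raw H.hN H.hσ H.hB _).trans
    (gnR_mono H.hB H.hσ.le H.hq.le (H2.lapSq_nonneg _) (H2.massSq_nonneg _) (cL n) (cM n))
  set mx : ℕ → ℝ := fun n => max 0 (√(u n).lapSq - rho N σ * √(u n).massSq) with hmx
  have hl : Tendsto (fun n => m / (u n).massSq) atTop (𝓝 1) := by
    have := (tendsto_const_nhds (x := m)).div hM hm.ne'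
    rwa [div_self hm.ne'] at this
  have hls : Tendsto (fun n => (m / (u n).massSq) ^ (σ + 1)) atTop (𝓝 1) := by
    have := hl.rpow_const (p := σ + 1) (Or.inl one_ne_zero)
    rwa [Real.one_rpow] at this
  have hup : Tendsto (fun n => rho N σ * ((m / (u n).massSq)⁻¹ * (m / (u n).massSq * (u n).energy σ - tildeE N σ m +
      |(m / (u n).massSq) ^ (σ + 1) - m / (u n).massSq| * K / (σ + 1)))) atTop (𝓝 0) := by
    have h1 := (((hl.mul hE).sub_const (tildeE N σ m)).add (((hls.sub hl).abs.mul_const K).div_const (σ + 1)))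
    have h2 := ((hl.inv₀ one_ne_zero).mul h1).const_mul (rho N σ)
    simpa using h2
  have hsq : Tendsto (fun n => mx n ^ 2) atTop (𝓝 0) := by
    refine squeeze_zero (fun n => by positivity) (fun n => ?_) hup
    obtain ⟨t, ht, ht1, h⟩ := H.claimA hm hm2 hbdd (hu n).1 (hu n).2.1
    have hM0 := H2.massSq_pos_iff.2 (hu n).1
    have hlp : 0 < m / (u n).massSq := by positivity
    set l := m / (u n).massSq
    have h1 : -((l ^ (σ + 1) - l) * t ^ ((N : ℝ) * σ / 2) * (u n).pPow σ / (σ + 1)) ≤ |l ^ (σ + 1) - l| * K / (σ + 1) := by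
      rw [← neg_div]
      gcongr
      have p0 := (u n).pPow_nonneg σ
      have hta : t ^ ((N : ℝ) * σ / 2) ≤ 1 := Real.rpow_le_one ht.le ht1 (by have := H.ha; linarith)
      have hta0 : 0 ≤ t ^ ((N : ℝ) * σ / 2) := by positivity
      calc -((l ^ (σ + 1) - l) * t ^ ((N : ℝ) * σ / 2) * (u n).pPow σ) =
          -(l ^ (σ + 1) - l) * (t ^ ((N : ℝ) * σ / 2) * (u n).pPow σ) := by ring
        _ ≤ |l ^ (σ + 1) - l| * (t ^ ((N : ℝ) * σ / 2) * (u n).pPow σ) := by gcongr; exact neg_le_abs _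
        _ ≤ |l ^ (σ + 1) - l| * (1 * K) := by gcongr; exact hP n
        _ = _ := by ring
    have h2 : l * (mx n ^ 2 / rho N σ) ≤ l * (u n).energy σ - tildeE N σ m + |l ^ (σ + 1) - l| * K / (σ + 1) := by
      have e : l * ((u n).energy σ - mx n ^ 2 / rho N σ) = l * (u n).energy σ - l * (mx n ^ 2 / rho N σ) := by ring
      change _ ≤ l * ((u n).energy σ - mx n ^ 2 / rho N σ) - _ at h
      linarith
    have h3 := mul_le_mul_of_nonneg_left (mul_le_mul_of_nonneg_left h2 (inv_pos.2 hlp).le) (show 0 ≤ rho N σ by linarith)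
    refine le_trans (le_of_eq ?_) h3
    field_simp
  have hmx0 : Tendsto mx atTop (𝓝 0) := by
    have h := hsq.sqrt
    rw [Real.sqrt_zero] at h
    refine h.congr fun n => Real.sqrt_sq (le_max_left _ _)
  refine ⟨fun n => (rho N σ * √(u n).massSq + mx n) ^ 2, ?_, fun n => ?_⟩
  · have := ((hM.sqrt.const_mul (rho N σ)).add hmx0).pow 2
    rwa [add_zero, mul_pow, Real.sq_sqrt hm.le] at this
  · have h1 : √(u n).lapSq ≤ rho N σ * √(u n).massSq + mx n := by
      have := le_max_right 0 (√(u n).lapSq - rho N σ * √(u n).massSq)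
      change _ ≤ mx n at this
      linarith
    have := pow_le_pow_left₀ (Real.sqrt_nonneg _) h1 2
    rwa [Real.sq_sqrt (u n).lapSq_nonneg] at this

theorem mainSeq (H : Hyp N σ) {m : ℝ} (hm : 0 < m) (hm2 : m < mu0 N σ)
    (hbdd : BddBelow {r : ℝ | ∃ U : H2 N, memO σ U ∧ U.massSq = m ∧ r = U.energy σ}) (hlt : tildeE N σ m < -m)
    {u : ℕ → H2 N} (hu : ∀ n, memO σ (u n)) (hM : Tendsto (fun n => (u n).massSq) atTop (𝓝 m))
    (hE : Tendsto (fun n => (u n).energy σ) atTop (𝓝 (tildeE N σ m))) :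
      ∃ (ψ : ℕ → ℕ) (xs : ℕ → Esp N) (U : H2 N), StrictMono ψ ∧ memO σ U ∧
        H2TendstoTrans (fun k => u (ψ k)) xs U ∧
        U.massSq = m ∧ U.energy σ = tildeE N σ m := by
  have hσ := H.hσ
  obtain ⟨C, cM, cL, b, hb, hLb⟩ := H.lap_limsup hm hm2 hbdd hu hM hE
  set T := tildeE N σ m with hT
  -- lower bound on the potential term
  have hPl : ∀ n, (σ + 1) * (-(u n).massSq - (u n).energy σ) ≤ (u n).pPow σ := by
    intro n
    have hG := (u n).grad_le_sqrt
    have e1 := Real.sq_sqrt (u n).lapSq_nonneg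
    have e2 := Real.sq_sqrt (u n).massSq_nonneg
    have h1 : 2 * (u n).gradSq ≤ (u n).lapSq + (u n).massSq := by
      nlinarith [sq_nonneg (√(u n).lapSq - √(u n).massSq)]
    have e3 : (u n).energy σ = (u n).lapSq - 2 * (u n).gradSq - (1 / (σ + 1) * (u n).pPow σ) := rfl
    have h2 : -(u n).massSq - (u n).energy σ ≤ 1 / (σ + 1) * (u n).pPow σ := by linarith
    calc _ ≤ (σ + 1) * (1 / (σ + 1) * (u n).pPow σ) := by gcongr
      _ = _ := by field_simp
  have hlim : Tendsto (fun n => (σ + 1) * (-(u n).massSq - (u n).energy σ)) atTop (𝓝 ((σ + 1) * (-m - T))) :=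
    (hM.neg.sub hE).const_mul _
  have hc : 0 < (σ + 1) * (-m - T) := mul_pos (by linarith) (by linarith)
  obtain ⟨n0, hn0⟩ := eventually_atTop.1 (hlim.eventually (eventually_gt_nhds (half_lt_self hc)))
  obtain ⟨ψ, xs, U, v, hψ, hUn, hv, sM, sG, sL, sP⟩ := H2.compactness H.hN H.hσ H.hq H.hB (w := fun n => u (n + n0))
    (C := C) (c := (σ + 1) * (-m - T) / 2) (fun n => cM _) (fun n => cL _) (by linarith)
    (fun n => ((hn0 (n + n0) (by omega)).le.trans (hPl _)))
  set χ : ℕ → ℕ := fun k => ψ k + n0 with hχ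
  have hχm : StrictMono χ := fun a b hab => by simp only [hχ]; have := hψ hab; omega
  have hχt := hχm.tendsto_atTop
  have lM : Tendsto (fun k => (u (χ k)).massSq) atTop (𝓝 m) := hM.comp hχt
  have lE : Tendsto (fun k => (u (χ k)).energy σ) atTop (𝓝 T) := hE.comp hχt
  have lb : Tendsto (fun k => b (χ k)) atTop (𝓝 (rho N σ ^ 2 * m)) := hb.comp hχt
  have vM : Tendsto (fun k => (v k).massSq) atTop (𝓝 (m - U.massSq)) := by
    have := (sM.add lM).sub_const U.massSq
    rw [zero_add] at this
    refine this.congr fun k => ?_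
    ring
  have hUM : U.massSq ≤ m := by
    have := ge_of_tendsto vM (Eventually.of_forall fun k => (v k).massSq_nonneg)
    linarith
  have hUM0 := H2.massSq_pos_iff.2 hUn
  have hUL0 := H2.lap_pos H.hN U hUn
  have vLb : Tendsto (fun k => (v k).lapSq + U.lapSq - (u (χ k)).lapSq + b (χ k)) atTop (𝓝 (rho N σ ^ 2 * m)) := by
    have := sL.add lb
    rwa [zero_add] at this
  have vLb' : ∀ k, (v k).lapSq + U.lapSq ≤ (v k).lapSq + U.lapSq - (u (χ k)).lapSq + b (χ k) := fun k => by
    have := hLb (χ k); linarith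
  have hUL : U.lapSq ≤ rho N σ ^ 2 * m :=
    ge_of_tendsto vLb (Eventually.of_forall fun k => by have := vLb' k; have := (v k).lapSq_nonneg; linarith)
  have hUD := H.D_pos_of hm hm2 hUn hUL hUM
  have hUO := H.memO_of hUn (hUM.trans_lt hm2) hUD
  have hUsub := H.sub_add hm hm2 hbdd hUM hUL
  have evM : ∀ᶠ k in atTop, (v k).massSq ≤ m :=
    (vM.eventually (eventually_lt_nhds (show m - U.massSq < m by linarith))).mono fun k hk => hk.le
  have evL : ∀ᶠ k in atTop, (v k).lapSq ≤ rho N σ ^ 2 * m := by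
    filter_upwards [vLb.eventually (eventually_lt_nhds (show rho N σ ^ 2 * m < rho N σ ^ 2 * m + U.lapSq by linarith))] with k hk
    have := vLb' k
    linarith
  have evE : ∀ᶠ k in atTop, (v k).massSq / m * T ≤ (v k).energy σ := by
    filter_upwards [evM, evL] with k h1 h2
    exact (H.sub_add hm hm2 hbdd h1 h2).1
  -- splitting of the energy
  have spl : ∀ ε > 0, ∀ᶠ k in atTop, U.energy σ + (v k).energy σ ≤ (u (χ k)).energy σ + ε := by
    intro ε hε
    have h1 : Tendsto (fun k => ((v k).lapSq + U.lapSq - (u (χ k)).lapSq) - 2 * ((v k).gradSq + U.gradSq - (u (χ k)).gradSq))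
        atTop (𝓝 0) := by
      have := sL.sub (sG.const_mul 2)
      simpa using this
    filter_upwards [h1.eventually (eventually_lt_nhds (half_pos hε)), sP ((σ + 1) * (ε / 2)) (by positivity)] with k h2 h3
    have h4 : 1 / (σ + 1) * (u (χ k)).pPow σ ≤ 1 / (σ + 1) * U.pPow σ + 1 / (σ + 1) * (v k).pPow σ + ε / 2 := by
      calc _ ≤ 1 / (σ + 1) * (U.pPow σ + (v k).pPow σ + (σ + 1) * (ε / 2)) := by
            gcongr
        _ = _ := by field_simp
    unfold H2.energy
    linarith
  have hmass : U.massSq = m := by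
    by_contra hne
    have hlt' : U.massSq < m := lt_of_le_of_ne hUM hne
    have hs := hUsub.2 hUn hlt'
    rw [← hT] at hs
    set η := U.energy σ - U.massSq / m * T with hη
    have hη0 : 0 < η := by linarith
    have h1 : Tendsto (fun k => (u (χ k)).energy σ + η / 2 - (v k).massSq / m * T) atTop
        (𝓝 (T + η / 2 - (m - U.massSq) / m * T)) :=
      (lE.add_const _).sub ((vM.div_const m).mul_const T)
    have h2 : U.energy σ ≤ T + η / 2 - (m - U.massSq) / m * T := by
      refine ge_of_tendsto h1 ?_
      filter_upwards [evE, spl (η / 2) (by linarith)] with k h3 h4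
      linarith
    have h3 : (m - U.massSq) / m * T = T - U.massSq / m * T := by field_simp
    rw [h3] at h2
    linarith
  have vM0 : Tendsto (fun k => (v k).massSq) atTop (𝓝 0) := by rwa [hmass, sub_self] at vM
  have vG0 : Tendsto (fun k => (v k).gradSq) atTop (𝓝 0) := by
    have h1 : Tendsto (fun k => √(rho N σ ^ 2 * m) * √(v k).massSq) atTop (𝓝 0) := by
      have := vM0.sqrt.const_mul (√(rho N σ ^ 2 * m))
      simpa using this
    refine squeeze_zero' (Eventually.of_forall fun k => (v k).gradSq_nonneg) ?_ h1
    filter_upwards [evL] with k hk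
    refine (v k).grad_le_sqrt.trans ?_
    gcongr
  have vP0 : Tendsto (fun k => (v k).pPow σ) atTop (𝓝 0) := by
    have h1 : Tendsto (fun k => gnR N σ (rho N σ ^ 2 * m) (v k).massSq) atTop (𝓝 0) := by
      have := (vM0.rpow_const (p := 1 + σ - (N : ℝ) * σ / 4) (Or.inr H.hq.le)).const_mul
        (GNconst N σ * (rho N σ ^ 2 * m) ^ ((N : ℝ) * σ / 4))
      rw [Real.zero_rpow H.hq.ne', mul_zero] at this
      exact this
    refine squeeze_zero' (Eventually.of_forall fun k => (v k).pPow_nonneg σ) ?_ h1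
    filter_upwards [evL] with k hk
    exact (H2.GN_raw H.hN H.hσ H.hB _).trans
      (gnR_mono H.hB H.hσ.le H.hq.le (H2.lapSq_nonneg _) (H2.massSq_nonneg _) hk le_rfl)
  have hUE : T ≤ U.energy σ := by
    have := hUsub.1
    rwa [hmass, div_self hm.ne', one_mul] at this
  have low : Tendsto (fun k => 2 * (v k).gradSq + 1 / (σ + 1) * (v k).pPow σ) atTop (𝓝 0) := by
    have := (vG0.const_mul 2).add (vP0.const_mul (1 / (σ + 1)))
    simpa using this
  have eV : ∀ k, (v k).energy σ = (v k).lapSq - (2 * (v k).gradSq + 1 / (σ + 1) * (v k).pPow σ) := fun k => by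
    unfold H2.energy; ring
  have hUE2 : U.energy σ ≤ T := by
    refine le_of_forall_pos_le_add fun ε hε => ?_
    have h1 : Tendsto (fun k => (u (χ k)).energy σ + ε + (2 * (v k).gradSq + 1 / (σ + 1) * (v k).pPow σ)) atTop
        (𝓝 (T + ε)) := by
      have := (lE.add_const ε).add low
      rwa [add_zero] at this
    refine ge_of_tendsto h1 ?_
    filter_upwards [spl ε hε] with k hk
    have := eV k
    have := (v k).lapSq_nonneg
    linarith
  have vL0 : Tendsto (fun k => (v k).lapSq) atTop (𝓝 0) := by
    rw [Metric.tendsto_atTop]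
    intro ε hε
    have h1 : Tendsto (fun k => (u (χ k)).energy σ + ε / 2 + (2 * (v k).gradSq + 1 / (σ + 1) * (v k).pPow σ) - U.energy σ) atTop
        (𝓝 (T + ε / 2 - U.energy σ)) := by
      have := ((lE.add_const (ε / 2)).add low).sub_const (U.energy σ)
      rwa [add_zero] at this
    refine eventually_atTop.1 ?_
    filter_upwards [spl (ε / 2) (half_pos hε), h1.eventually (eventually_lt_nhds (show T + ε / 2 - U.energy σ < ε by linarith))] with k h2 h3
    rw [Real.dist_eq, sub_zero, abs_of_nonneg (v k).lapSq_nonneg]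
    have := eV k
    linarith
  -- strong convergence
  have conv : ∀ (f : ℕ → Esp N → ℂ), (∀ k, L2m (f k)) → Tendsto (fun k => ∫ x, ‖f k x‖ ^ 2) atTop (𝓝 0) →
      Tendsto (fun k => eLpNorm (f k) 2 volume) atTop (𝓝 0) := by
    intro f hf h0
    simp only [fun k => (hf k).eLpNorm_eq]
    have := ENNReal.tendsto_ofReal h0.sqrt
    simpa using this
  have fu : ∀ k x, (v k).u x = (u (χ k)).u (x + xs k) - U.u x := fun k x => by
    rw [hv]; simp [H2.sub, H2.aff, hχ]
  have fg : ∀ k i x, (v k).grad i x = (u (χ k)).grad i (x + xs k) - U.grad i x := fun k i x => by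
    rw [hv]; simp [H2.sub, H2.aff, hχ]
  have fl : ∀ k x, (v k).lapl x = (u (χ k)).lapl (x + xs k) - U.lapl x := fun k x => by
    rw [hv]; simp [H2.sub, H2.aff, hχ]
  refine ⟨χ, xs, U, hχm, hUO, ⟨?_, fun i => ?_, ?_⟩, hmass, le_antisymm hUE2 hUE⟩
  · simp only [← fu]
    exact conv (fun k => (v k).u) (fun k => (v k).u_mem) vM0
  · simp only [← fg]
    refine conv (fun k => (v k).grad i) (fun k => (v k).grad_mem i) ?_
    refine squeeze_zero (fun k => integral_nonneg fun _ => by positivity) (fun k => ?_) vG0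
    unfold H2.gradSq
    exact Finset.single_le_sum (f := fun i => ∫ x, ‖(v k).grad i x‖ ^ 2)
      (fun _ _ => integral_nonneg fun _ => by positivity) (Finset.mem_univ i)
  · simp only [← fl]
    exact conv (fun k => (v k).lapl) (fun k => (v k).lapl_mem) vL0

end Hyp

theorem hyp_of {N : ℕ} {σ : ℝ} (hN : 1 ≤ N) (hσ4 : 4 / (N : ℝ) < σ)
    (hsub : N ≤ 4 ∨ (5 ≤ N ∧ σ < 4 / ((N : ℝ) - 4))) {m : ℝ} (hm0 : 0 < m) (hm : m < mu0 N σ) : Hyp N σ := by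
  have hN' : (1:ℝ) ≤ N := by exact_mod_cast hN
  have hσ : 0 < σ := lt_trans (by positivity) hσ4
  have ha : 4 < (N : ℝ) * σ := by
    rw [div_lt_iff₀ (by linarith)] at hσ4; linarith
  refine ⟨hN, hσ, ha, ?_, ?_⟩
  · rcases hsub with h | ⟨h, h2⟩
    · have : (N : ℝ) ≤ 4 := by exact_mod_cast h
      nlinarith
    · have : (5:ℝ) ≤ N := by exact_mod_cast h
      rw [lt_div_iff₀ (by linarith)] at h2
      nlinarith
  · have h0 : 0 ≤ GNconst N σ := by
      refine Real.sSup_nonneg ?_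
      rintro r ⟨U, -, rfl⟩
      have := U.pPow_nonneg σ
      unfold rLp
      positivity
    refine lt_of_le_of_ne h0 fun h => ?_
    unfold mu0 at hm
    rw [← h, Real.zero_rpow (by simp [hσ.ne'])] at hm
    simp at hm
    linarith

end

/-- If `0 < m < μ₀` and `Ẽ_min(m) < -m`, then `Ẽ_min(m)` is achieved,
and every minimizing sequence in `O` is precompact in `H²` modulo translations, the limit
being a minimizer in `O`. -/
theorem stmt19 (N : ℕ) (σ : ℝ) (hN : 1 ≤ N) (hσ4 : 4 / (N : ℝ) < σ)
    (hsub : N ≤ 4 ∨ (5 ≤ N ∧ σ < 4 / ((N : ℝ) - 4)))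
    (m : ℝ) (hm0 : 0 < m) (hm : m < mu0 N σ) (hlt : tildeE N σ m < -m) :
    (∃ U : H2 N, memO σ U ∧ U.massSq = m ∧ U.energy σ = tildeE N σ m) ∧
    (∀ u : ℕ → H2 N, (∀ n, memO σ (u n)) →
      Tendsto (fun n => (u n).massSq) atTop (nhds m) →
      Tendsto (fun n => (u n).energy σ) atTop (nhds (tildeE N σ m)) →
      ∃ (ψ : ℕ → ℕ) (xs : ℕ → Esp N) (U : H2 N), StrictMono ψ ∧ memO σ U ∧
        H2TendstoTrans (fun k => u (ψ k)) xs U ∧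
        U.massSq = m ∧ U.energy σ = tildeE N σ m) := by
  have H := hyp_of hN hσ4 hsub hm0 hm
  have hbdd : BddBelow {r : ℝ | ∃ U : H2 N, memO σ U ∧ U.massSq = m ∧ r = U.energy σ} := by
    by_contra h
    have : tildeE N σ m = 0 := Real.sInf_of_not_bddBelow h
    linarith
  have hne : {r : ℝ | ∃ U : H2 N, memO σ U ∧ U.massSq = m ∧ r = U.energy σ}.Nonempty := by
    by_contra h
    have h2 : tildeE N σ m = 0 := by
      unfold tildeE
      rw [Set.not_nonempty_iff_eq_empty.mp h, Real.sInf_empty]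
    linarith
  refine ⟨?_, fun u hu hM hE => H.mainSeq hm0 hm hbdd hlt hu hM hE⟩
  obtain ⟨r, -, hr, hmem⟩ := exists_seq_tendsto_sInf hne hbdd
  choose V hV hVm hVe using hmem
  have hE : Tendsto (fun n => (V n).energy σ) atTop (nhds (tildeE N σ m)) :=
    hr.congr hVe
  have hM : Tendsto (fun n => (V n).massSq) atTop (nhds m) := by
    simp only [hVm]
    exact tendsto_const_nhds
  obtain ⟨_, _, U, _, hU, _, h1, h2⟩ := H.mainSeq hm0 hm hbdd hlt hV hM hE
  exact ⟨U, hU, h1, h2⟩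

end
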